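/- arXiv:1906.06860 — 2 statements merged into one kernel-verified Lean document; each statement's English description precedes it below -/
import Mathlib

section
/- The series $D$ is invariant under the substitution $\epsilon\mapsto-\epsilon$; that is, $D$ contains only even powers of $\epsilon$ (the coefficient of $\epsilon^{2g+1}$ in $D$ vanishes for every $g\ge0$). -/
open PowerSeries

variable (A : Type*) [CommRing A] [Algebra ℚ A]

/-- The image `u_c ∈ A[[x,ε]]` of `u ∈ A[[x]]` under the continuous `A`-algebra map
sending `x ↦ x + cε`, described coefficientwise: the coefficient of `x^i ε^j` in `u_c`
is `C(i+j, j) c^j` times the coefficient of `x^{i+j}` in `u`. -/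
noncomputable def usub (c : ℚ) (u : PowerSeries A) : MvPowerSeries (Fin 2) A :=
  fun d => algebraMap ℚ A ((Nat.choose (d 0 + d 1) (d 1) : ℚ) * c ^ (d 1)) *
    PowerSeries.coeff (R := A) (d 0 + d 1) u

/-- The formal exponential of a multivariate power series with zero constant term,
`fexpA V = ∑_{n≥0} V^n / n!`, defined coefficientwise. -/
noncomputable def fexpA (V : MvPowerSeries (Fin 2) A) : MvPowerSeries (Fin 2) A :=
  fun d => ∑ n ∈ Finset.range (d 0 + d 1 + 1),
    MvPowerSeries.coeff (R := A) d ((Nat.factorial n : ℚ)⁻¹ • V ^ n)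

/-- The series `D = ∑_{0 ≤ α_1 ≤ ⋯ ≤ α_m ≤ n} exp(∑_{j=1}^m (u_{c_j} - u))` with
`c_j = α_j m - (j - 1/2) n`, the sum ranging over monotone tuples
`0 ≤ α_1 ≤ ⋯ ≤ α_m ≤ n`.  In operator language,
`e^{mu}·D = Λ^{-n/2} res (Λ^m + e^u Λ^{-n})^{m+n}`. -/
noncomputable def Dser (m n : ℕ) (u : PowerSeries A) : MvPowerSeries (Fin 2) A :=
  ∑ α ∈ Finset.univ.filter
      (fun α : Fin m → Fin (n + 1) => ∀ i j : Fin m, i ≤ j → α i ≤ α j),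
    fexpA A (∑ j : Fin m,
      (usub A ((α j : ℚ) * m - (((j : ℕ) : ℚ) + 1 / 2) * n) u - usub A 0 u))

noncomputable def flipE : MvPowerSeries (Fin 2) A →+* MvPowerSeries (Fin 2) A :=
  MvPowerSeries.rescale (![1, -1] : Fin 2 → A)

theorem coeff_flipE (V : MvPowerSeries (Fin 2) A) (d : Fin 2 →₀ ℕ) :
    MvPowerSeries.coeff d (flipE A V) = (-1) ^ (d 1) * MvPowerSeries.coeff d V := by
  rw [flipE, MvPowerSeries.coeff_rescale]
  congr 1
  rw [Finsupp.prod_fintype _ _ (by simp)]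
  simp

theorem flipE_usub (c : ℚ) (u : PowerSeries A) : flipE A (usub A c u) = usub A (-c) u := by
  ext d
  rw [coeff_flipE]
  change _ * (algebraMap ℚ A _ * _) = algebraMap ℚ A _ * _
  rw [← mul_assoc]
  congr 1
  rw [neg_pow c]
  simp only [map_mul, map_pow, map_neg, map_one]
  ring

theorem flipE_fexpA (V : MvPowerSeries (Fin 2) A) : flipE A (fexpA A V) = fexpA A (flipE A V) := by
  ext d
  rw [coeff_flipE]
  rw [MvPowerSeries.coeff_apply, MvPowerSeries.coeff_apply]
  unfold fexpA
  rw [Finset.mul_sum]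
  refine Finset.sum_congr rfl fun k _ => ?_
  rw [← coeff_flipE, ← map_pow]
  congr 1
  ext e
  rw [coeff_flipE]
  change _ * ((_ : ℚ) • MvPowerSeries.coeff e (V ^ k)) =
    (_ : ℚ) • MvPowerSeries.coeff e (flipE A (V ^ k))
  rw [coeff_flipE, mul_smul_comm]

theorem flipE_Dser (m n : ℕ) (u : PowerSeries A) : flipE A (Dser A m n u) = Dser A m n u := by
  unfold Dser
  rw [map_sum]
  refine Finset.sum_nbij' (fun α j => Fin.rev (α (Fin.rev j))) (fun α j => Fin.rev (α (Fin.rev j)))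
    ?_ ?_ ?_ ?_ ?_
  · intro α h
    simp only [Finset.mem_filter, Finset.mem_univ, true_and] at h ⊢
    intro i j hij
    exact Fin.rev_le_rev.2 (h _ _ (Fin.rev_le_rev.2 hij))
  · intro α h
    simp only [Finset.mem_filter, Finset.mem_univ, true_and] at h ⊢
    intro i j hij
    exact Fin.rev_le_rev.2 (h _ _ (Fin.rev_le_rev.2 hij))
  · intro α _
    simp
  · intro α _
    simp
  · intro α _
    rw [flipE_fexpA, map_sum]
    congr 1
    refine Fintype.sum_equiv Fin.revPerm _ _ fun j => ?_
    rw [map_sub, flipE_usub, flipE_usub, neg_zero]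
    congr 2
    have h1 : ((Fin.rev j : Fin m) : ℕ) + (j : ℕ) + 1 = m := by
      rw [Fin.val_rev]; omega
    have h2 : ((Fin.rev (α j) : Fin (n + 1)) : ℕ) + (α j : ℕ) = n := by
      rw [Fin.val_rev]; omega
    have h1' : (((Fin.rev j : Fin m) : ℕ) : ℚ) = m - 1 - (j : ℕ) := by
      rw [eq_sub_iff_add_eq, eq_sub_iff_add_eq]; exact_mod_cast h1
    have h2' : (((Fin.rev (α j) : Fin (n + 1)) : ℕ) : ℚ) = n - (α j : ℕ) := by
      rw [eq_sub_iff_add_eq]; exact_mod_cast h2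
    simp only [Fin.revPerm_apply, Fin.rev_rev, h1', h2']
    ring

/-- The series `D` is invariant under `ε ↦ -ε`: the coefficient of `x^i ε^j` in `D`
vanishes for every odd `j`. -/
theorem Dser_even_in_epsilon (m n : ℕ) (hm : 0 < m) (hn : 0 < n)
    (hmn : Nat.Coprime m n) (u : PowerSeries A) :
    ∀ i j : ℕ, Odd j →
      MvPowerSeries.coeff (R := A) (Finsupp.single 0 i + Finsupp.single 1 j) (Dser A m n u) = 0 := by
  intro i j hj
  have h := coeff_flipE A (Dser A m n u) (Finsupp.single 0 i + Finsupp.single 1 j)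
  rw [flipE_Dser] at h
  have hd : (Finsupp.single 0 i + Finsupp.single 1 j : Fin 2 →₀ ℕ) 1 = j := by simp
  rw [hd, hj.neg_one_pow, neg_one_mul] at h
  have h2 : (2 : ℚ) • MvPowerSeries.coeff (Finsupp.single 0 i + Finsupp.single 1 j)
      (Dser A m n u) = 0 := by
    rw [two_smul]; exact eq_neg_iff_add_eq_zero.1 h
  exact (smul_eq_zero_iff_right (two_ne_zero)).1 h2
end

section
/- The first two gap coefficients are given explicitly by $P_1(m,n)=\frac{(m-1)\,n\,h}{24\,m}$ and $P_2(m,n)=-\frac{4m^2n^2h^2+mnh\,(3m^2-7mn-7n^2)-nh\,(4m^2-3mn-3n^2)+mnh}{960\,m}$. -/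
open MvPowerSeries

/-- The formal exponential of a multivariate power series (with zero constant term),
`fexp V = ∑_{n≥0} V^n / n!`, defined coefficientwise. -/
noncomputable def fexp (V : MvPowerSeries (Fin 2) ℚ) : MvPowerSeries (Fin 2) ℚ :=
  fun d => ∑ n ∈ Finset.range (d 0 + d 1 + 1),
    (Nat.factorial n : ℚ)⁻¹ * MvPowerSeries.coeff d (V ^ n)

/-- The shift `S_c : x ↦ x + cε`, i.e. the continuous `ℚ`-algebra endomorphism of
`ℚ[[X,E]]` with `S_c(X) = X + c·E` and `S_c(E) = E`, described coefficientwise. -/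
noncomputable def shiftS (c : ℚ) (V : MvPowerSeries (Fin 2) ℚ) : MvPowerSeries (Fin 2) ℚ :=
  fun d => ∑ t ∈ Finset.range (d 1 + 1),
    (Nat.choose (d 0 + t) t : ℚ) * c ^ t *
      MvPowerSeries.coeff (Finsupp.single 0 (d 0 + t) + Finsupp.single 1 (d 1 - t)) V

/-- The difference equation
`∑_{0 ≤ α_1 ≤ ⋯ ≤ α_m ≤ n} exp(∑_{j=1}^m S_{α_j m - (j-1/2) n}(V)) = C(m+n,m)·(1+X)`. -/
def diffEq (m n : ℕ) (V : MvPowerSeries (Fin 2) ℚ) : Prop :=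
  ∑ α ∈ Finset.univ.filter
      (fun α : Fin m → Fin (n + 1) => ∀ i j : Fin m, i ≤ j → α i ≤ α j),
    fexp (∑ j : Fin m, shiftS ((α j : ℚ) * m - (((j : ℕ) : ℚ) + 1 / 2) * n) V)
  = (Nat.choose (m + n) m : MvPowerSeries (Fin 2) ℚ) * (1 + MvPowerSeries.X 0)

/-- The `E^k`-slice of a power series in `X, E`. -/
noncomputable def sl (k : ℕ) : MvPowerSeries (Fin 2) ℚ →ₗ[ℚ] PowerSeries ℚ where
  toFun V := PowerSeries.mk fun i =>
    MvPowerSeries.coeff (Finsupp.single 0 i + Finsupp.single 1 k) V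
  map_add' U V := by ext i; simp
  map_smul' c V := by ext i; simp

lemma coeff_sl (k i : ℕ) (V : MvPowerSeries (Fin 2) ℚ) :
    PowerSeries.coeff i (sl k V)
      = MvPowerSeries.coeff (Finsupp.single 0 i + Finsupp.single 1 k) V := by
  simp [sl]

lemma finsupp_two (d : Fin 2 →₀ ℕ) : Finsupp.single 0 (d 0) + Finsupp.single 1 (d 1) = d := by
  ext i
  fin_cases i <;> simp

lemma sl_mul (k : ℕ) (U V : MvPowerSeries (Fin 2) ℚ) :
    sl k (U * V) = ∑ p ∈ Finset.HasAntidiagonal.antidiagonal k, sl p.1 U * sl p.2 V := by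
  ext i
  rw [coeff_sl, MvPowerSeries.coeff_mul, map_sum]
  simp only [PowerSeries.coeff_mul, coeff_sl]
  rw [← Finset.sum_product']
  symm
  refine Finset.sum_bij'
    (fun q _ => (Finsupp.single 0 q.2.1 + Finsupp.single 1 q.1.1,
      Finsupp.single 0 q.2.2 + Finsupp.single 1 q.1.2))
    (fun p _ => ((p.1 1, p.2 1), (p.1 0, p.2 0))) ?_ ?_ ?_ ?_ ?_
  · rintro ⟨⟨a, b⟩, ⟨c, d⟩⟩ h
    simp only [Finset.mem_product, Finset.HasAntidiagonal.mem_antidiagonal] at h ⊢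
    obtain ⟨rfl, rfl⟩ := h
    rw [Finsupp.single_add, Finsupp.single_add]
    abel
  · rintro ⟨p, q⟩ h
    simp only [Finset.mem_product, Finset.HasAntidiagonal.mem_antidiagonal] at h ⊢
    constructor
    · have := DFunLike.congr_fun h 1
      simpa using this
    · have := DFunLike.congr_fun h 0
      simpa using this
  · rintro ⟨⟨a, b⟩, ⟨c, d⟩⟩ h
    simp
  · rintro ⟨p, q⟩ h
    simp only [finsupp_two]
  · rintro ⟨⟨a, b⟩, ⟨c, d⟩⟩ h
    rfl

lemma sl_zero_mul (U V : MvPowerSeries (Fin 2) ℚ) : sl 0 (U * V) = sl 0 U * sl 0 V := by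
  rw [sl_mul]; simp

lemma sl_zero_one : sl 0 (1 : MvPowerSeries (Fin 2) ℚ) = 1 := by
  ext i
  rw [coeff_sl, MvPowerSeries.coeff_one, PowerSeries.coeff_one]
  simp

lemma sl_zero_pow (U : MvPowerSeries (Fin 2) ℚ) (n : ℕ) : sl 0 (U ^ n) = (sl 0 U) ^ n := by
  induction n with
  | zero => simp [sl_zero_one]
  | succ n ih => rw [pow_succ, pow_succ, sl_zero_mul, ih]

lemma sl_pderiv_one (k : ℕ) (V : MvPowerSeries (Fin 2) ℚ) :
    sl k (MvPowerSeries.pderiv ℚ 1 V) = ((k : PowerSeries ℚ) + 1) * sl (k+1) V := by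
  ext i
  have : ((k : PowerSeries ℚ) + 1) = PowerSeries.C ((k : ℚ) + 1) := by simp
  rw [this, PowerSeries.coeff_C_mul, coeff_sl, coeff_sl, MvPowerSeries.coeff_pderiv,
    add_assoc, ← Finsupp.single_add]
  simp [mul_comm]

lemma sl_pderiv_zero (k : ℕ) (V : MvPowerSeries (Fin 2) ℚ) :
    sl k (MvPowerSeries.pderiv ℚ 0 V) = PowerSeries.derivative ℚ (sl k V) := by
  ext i
  rw [PowerSeries.coeff_derivative, coeff_sl, coeff_sl, MvPowerSeries.coeff_pderiv,
    add_right_comm, ← Finsupp.single_add]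
  simp

/-- Truncated exponential. -/
noncomputable def texp (N : ℕ) (W : MvPowerSeries (Fin 2) ℚ) : MvPowerSeries (Fin 2) ℚ :=
  ∑ n ∈ Finset.range N, ((Nat.factorial n : ℚ)⁻¹) • W ^ n

lemma coeff_fexp (W : MvPowerSeries (Fin 2) ℚ) (d : Fin 2 →₀ ℕ) :
    MvPowerSeries.coeff d (fexp W) = ∑ n ∈ Finset.range (d 0 + d 1 + 1),
      (Nat.factorial n : ℚ)⁻¹ * MvPowerSeries.coeff d (W ^ n) := rfl

lemma coeff_texp (N : ℕ) (W : MvPowerSeries (Fin 2) ℚ) (d : Fin 2 →₀ ℕ) :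
    MvPowerSeries.coeff d (texp N W) = ∑ n ∈ Finset.range N,
      (Nat.factorial n : ℚ)⁻¹ * MvPowerSeries.coeff d (W ^ n) := by
  simp [texp]

lemma coeff_fexp_eq (W : MvPowerSeries (Fin 2) ℚ) (hW : MvPowerSeries.constantCoeff W = 0)
    (d : Fin 2 →₀ ℕ) (N : ℕ) (hN : d 0 + d 1 + 1 ≤ N) :
    MvPowerSeries.coeff d (fexp W) = MvPowerSeries.coeff d (texp N W) := by
  rw [coeff_fexp, coeff_texp]
  apply Finset.sum_subset
  · intro n hn; simp only [Finset.mem_range] at *; omega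
  · intro n _ hn
    rw [MvPowerSeries.coeff_of_lt_order, mul_zero]
    refine lt_of_lt_of_le ?_ (MvPowerSeries.le_order_pow_of_constantCoeff_eq_zero n hW)
    have : Finsupp.degree d = d 0 + d 1 := by
      simp [Finsupp.degree_eq_sum]
    rw [this]
    simp only [Finset.mem_range] at hn
    exact_mod_cast (by omega : d 0 + d 1 < n)

lemma pderiv_texp (i : Fin 2) (N : ℕ) (W : MvPowerSeries (Fin 2) ℚ) :
    MvPowerSeries.pderiv ℚ i (texp (N+1) W) = MvPowerSeries.pderiv ℚ i W * texp N W := by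
  induction N with
  | zero => simp [texp, MvPowerSeries.pderiv_one]
  | succ N ih =>
    have e1 : texp (N+1+1) W = texp (N+1) W + ((Nat.factorial (N+1) : ℚ)⁻¹) • W ^ (N+1) := by
      simp only [texp]; rw [Finset.sum_range_succ]
    have e2 : texp (N+1) W = texp N W + ((Nat.factorial N : ℚ)⁻¹) • W ^ N := by
      simp only [texp]; rw [Finset.sum_range_succ]
    rw [e1, map_add, ih, e2, mul_add, Derivation.map_smul, MvPowerSeries.pderiv_pow]
    congr 1
    rw [Nat.add_sub_cancel]
    have : ((N+1 : ℕ) : MvPowerSeries (Fin 2) ℚ) * W ^ N * MvPowerSeries.pderiv ℚ i W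
        = ((N+1 : ℕ) : ℚ) • (MvPowerSeries.pderiv ℚ i W * W ^ N) := by
      rw [Nat.cast_smul_eq_nsmul, nsmul_eq_mul]; ring
    rw [this, smul_smul, mul_smul_comm]
    congr 1
    rw [Nat.factorial_succ]
    have : ((N+1 : ℕ) : ℚ) ≠ 0 := by positivity
    have : ((N.factorial : ℕ) : ℚ) ≠ 0 := by positivity
    push_cast
    field_simp

lemma pderiv_fexp (i : Fin 2) (W : MvPowerSeries (Fin 2) ℚ)
    (hW : MvPowerSeries.constantCoeff W = 0) :
    MvPowerSeries.pderiv ℚ i (fexp W) = MvPowerSeries.pderiv ℚ i W * fexp W := by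
  ext d
  have h1 : MvPowerSeries.coeff d (MvPowerSeries.pderiv ℚ i (fexp W))
      = MvPowerSeries.coeff d (MvPowerSeries.pderiv ℚ i (texp (d 0 + d 1 + 1 + 1) W)) := by
    rw [MvPowerSeries.coeff_pderiv, MvPowerSeries.coeff_pderiv,
      coeff_fexp_eq W hW _ (d 0 + d 1 + 1 + 1)]
    fin_cases i <;> simp <;> omega
  rw [h1, pderiv_texp, MvPowerSeries.coeff_mul, MvPowerSeries.coeff_mul]
  apply Finset.sum_congr rfl
  rintro ⟨p, q⟩ h
  rw [Finset.HasAntidiagonal.mem_antidiagonal] at h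
  congr 1
  symm
  apply coeff_fexp_eq W hW
  have h0 := DFunLike.congr_fun h 0
  have h1 := DFunLike.congr_fun h 1
  simp at h0 h1
  simp only
  omega

lemma sl_fexp_succ (k : ℕ) (W : MvPowerSeries (Fin 2) ℚ)
    (hW : MvPowerSeries.constantCoeff W = 0) :
    ((k : PowerSeries ℚ) + 1) * sl (k+1) (fexp W)
      = ∑ p ∈ Finset.HasAntidiagonal.antidiagonal k,
          ((p.1 : PowerSeries ℚ) + 1) * sl (p.1+1) W * sl p.2 (fexp W) := by
  rw [← sl_pderiv_one, pderiv_fexp 1 W hW, sl_mul]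
  simp only [sl_pderiv_one]

lemma sl_fexp_deriv (W : MvPowerSeries (Fin 2) ℚ)
    (hW : MvPowerSeries.constantCoeff W = 0) :
    PowerSeries.derivative ℚ (sl 0 (fexp W))
      = PowerSeries.derivative ℚ (sl 0 W) * sl 0 (fexp W) := by
  rw [← sl_pderiv_zero, pderiv_fexp 0 W hW, sl_zero_mul, sl_pderiv_zero]

lemma sl_fexp_congr (W W' : MvPowerSeries (Fin 2) ℚ) (h : sl 0 W = sl 0 W') :
    sl 0 (fexp W) = sl 0 (fexp W') := by
  ext i
  rw [coeff_sl, coeff_sl, coeff_fexp, coeff_fexp]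
  apply Finset.sum_congr rfl
  intro n _
  rw [← coeff_sl, ← coeff_sl, sl_zero_pow, sl_zero_pow, h]

lemma coeff_shiftS (c : ℚ) (V : MvPowerSeries (Fin 2) ℚ) (d : Fin 2 →₀ ℕ) :
    MvPowerSeries.coeff d (shiftS c V) = ∑ t ∈ Finset.range (d 1 + 1),
    (Nat.choose (d 0 + t) t : ℚ) * c ^ t *
      MvPowerSeries.coeff (Finsupp.single 0 (d 0 + t) + Finsupp.single 1 (d 1 - t)) V := rfl

lemma sl_shiftS (k : ℕ) (c : ℚ) (V : MvPowerSeries (Fin 2) ℚ) :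
    sl k (shiftS c V) = ∑ t ∈ Finset.range (k+1), PowerSeries.C (c ^ t / (t.factorial : ℚ)) *
      (PowerSeries.derivative ℚ)^[t] (sl (k - t) V) := by
  ext i
  rw [coeff_sl, coeff_shiftS, map_sum]
  simp only [PowerSeries.coeff_C_mul, PowerSeries.coeff_iterate_derivative, coeff_sl]
  simp
  apply Finset.sum_congr rfl
  intro t _
  have : ((t.factorial : ℕ) : ℚ) ≠ 0 := by positivity
  rw [Nat.ascFactorial_eq_factorial_mul_choose]
  push_cast
  field_simp

lemma const_shiftS (c : ℚ) (V : MvPowerSeries (Fin 2) ℚ) :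
    MvPowerSeries.constantCoeff (shiftS c V) = MvPowerSeries.constantCoeff V := by
  rw [← MvPowerSeries.coeff_zero_eq_constantCoeff_apply, coeff_shiftS]
  simp

/-- Weakly increasing sequences of length `j` with values at most `a`. -/
def Nset (j a : ℕ) : Finset (Fin j → ℕ) :=
  (Fintype.piFinset fun _ => Finset.range (a + 1)).filter (fun α => ∀ i k : Fin j, i ≤ k → α i ≤ α k)

lemma mem_Nset {j a : ℕ} (α : Fin j → ℕ) :
    α ∈ Nset j a ↔ (∀ i, α i ≤ a) ∧ ∀ i k : Fin j, i ≤ k → α i ≤ α k := by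
  simp [Nset, Nat.lt_succ_iff]

lemma sum_Nset (j a : ℕ) (f : (Fin j → ℕ) → ℚ) :
    ∑ α ∈ Finset.univ.filter
      (fun α : Fin j → Fin (a + 1) => ∀ i k : Fin j, i ≤ k → α i ≤ α k),
      f (fun i => (α i : ℕ)) = ∑ α ∈ Nset j a, f α := by
  refine Finset.sum_bij' (fun α _ i => (α i : ℕ))
    (fun α hα i => ⟨α i, Nat.lt_succ_of_le (((mem_Nset α).1 hα).1 i)⟩) ?_ ?_ ?_ ?_ ?_
  · intro α hα
    rw [mem_Nset]
    refine ⟨fun i => Nat.lt_succ_iff.1 (α i).2, fun i k h => ?_⟩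
    exact (Finset.mem_filter.1 hα).2 i k h
  · intro α hα
    simp only [Finset.mem_filter, Finset.mem_univ, true_and]
    intro i k h
    exact ((mem_Nset α).1 hα).2 i k h
  · intro α hα; rfl
  · intro α hα; rfl
  · intro α hα; rfl

lemma Nset_zero (a : ℕ) (f : (Fin 0 → ℕ) → ℚ) :
    ∑ α ∈ Nset 0 a, f α = f (fun i => i.elim0) := by
  have : Nset 0 a = {fun i => i.elim0} := by
    ext α
    rw [mem_Nset, Finset.mem_singleton]
    constructor
    · intro _; funext i; exact i.elim0
    · intro _; exact ⟨fun i => i.elim0, fun i => i.elim0⟩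
  rw [this, Finset.sum_singleton]

lemma snoc_mem {j a : ℕ} {α : Fin j → ℕ} (h : α ∈ Nset j a) :
    (Fin.snoc (α := fun _ => ℕ) α a : Fin (j+1) → ℕ) ∈ Nset (j+1) a := by
  rw [mem_Nset] at h ⊢
  have h1 : ∀ i, (Fin.snoc (α := fun _ => ℕ) α a : Fin (j+1) → ℕ) i ≤ a := by
    intro i
    refine Fin.lastCases ?_ (fun i => ?_) i
    · simp
    · simpa using h.1 i
  refine ⟨h1, fun i k => ?_⟩
  refine Fin.lastCases ?_ (fun k => ?_) k
  · intro _; simpa using h1 i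
  · refine Fin.lastCases ?_ (fun i => ?_) i
    · intro hh
      exact absurd hh (not_le.2 (Fin.castSucc_lt_last k))
    · intro hh
      simpa using h.2 i k (by simpa using hh)

lemma sum_Nset_last (j a : ℕ) (f : (Fin (j+1) → ℕ) → ℚ) :
    ∑ α ∈ (Nset (j+1) a).filter (fun α => α (Fin.last j) = a), f α
      = ∑ α ∈ Nset j a, f (Fin.snoc (α := fun _ => ℕ) α a) := by
  symm
  refine Finset.sum_bij' (fun α _ => Fin.snoc (α := fun _ => ℕ) α a)
    (fun α _ => fun i => α i.castSucc) ?_ ?_ ?_ ?_ ?_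
  · intro α hα
    rw [Finset.mem_filter]
    exact ⟨snoc_mem hα, by simp⟩
  · intro α hα
    rw [Finset.mem_filter, mem_Nset] at hα
    rw [mem_Nset]
    exact ⟨fun i => hα.1.1 _, fun i k h => hα.1.2 _ _ (by simpa using h)⟩
  · intro α hα; funext i; simp
  · intro α hα
    rw [Finset.mem_filter] at hα
    funext i
    refine Fin.lastCases ?_ (fun i => ?_) i
    · simp [hα.2]
    · simp
  · intro α hα; rfl

lemma Nset_rec_zero (j : ℕ) (f : (Fin (j+1) → ℕ) → ℚ) :
    ∑ α ∈ Nset (j+1) 0, f α = ∑ α ∈ Nset j 0, f (Fin.snoc (α := fun _ => ℕ) α 0) := by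
  rw [← sum_Nset_last, Finset.filter_true_of_mem]
  intro α hα
  exact Nat.le_zero.1 (((mem_Nset α).1 hα).1 _)

lemma Nset_rec (j a : ℕ) (f : (Fin (j+1) → ℕ) → ℚ) :
    ∑ α ∈ Nset (j+1) (a+1), f α = ∑ α ∈ Nset (j+1) a, f α
      + ∑ α ∈ Nset j (a+1), f (Fin.snoc (α := fun _ => ℕ) α (a+1)) := by
  rw [← sum_Nset_last, ← Finset.sum_filter_add_sum_filter_not (Nset (j+1) (a+1))
    (fun α => α (Fin.last j) = a+1), add_comm]
  congr 1
  apply Finset.sum_congr _ (fun _ _ => rfl)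
  ext α
  rw [Finset.mem_filter, mem_Nset, mem_Nset]
  constructor
  · rintro ⟨⟨h1, h2⟩, h3⟩
    refine ⟨fun i => ?_, h2⟩
    have := h2 i _ (Fin.le_last i)
    have := h1 (Fin.last j)
    omega
  · rintro ⟨h1, h2⟩
    refine ⟨⟨fun i => (h1 i).trans (Nat.le_succ a), h2⟩, ?_⟩
    have := h1 (Fin.last j)
    omega

/-- Power sums of the shifts. -/
def pw (M N : ℚ) (k : ℕ) {j : ℕ} (α : Fin j → ℕ) : ℚ :=
  ∑ i : Fin j, ((α i : ℚ) * M - (((i : ℕ) : ℚ) + 1 / 2) * N) ^ k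

lemma pw_snoc (M N : ℚ) (k : ℕ) {j : ℕ} (α : Fin j → ℕ) (b : ℕ) :
    pw M N k (Fin.snoc (α := fun _ => ℕ) α b : Fin (j+1) → ℕ)
      = pw M N k α + ((b : ℚ) * M - ((j : ℚ) + 1 / 2) * N) ^ k := by
  simp [pw, Fin.sum_univ_castSucc]

def T1 (j a M N : ℚ) : ℚ :=
  (1*j*a*M + (-1*j^2*N))/2

def T2 (j a M N : ℚ) : ℚ :=
  ((-1*j*N^2) + 2*j*a*M*N + 2*j*a*M^2 + 4*j*a^2*M^2 + (-8*j^2*a*M*N) + 4*j^3*N^2)/12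

def T3 (j a M N : ℚ) : ℚ :=
  ((-1*j*a*M*N^2) + 2*j*a^2*M^2*N + 2*j*a^2*M^3 + 2*j*a^3*M^3 + 1*j^2*N^3 + (-2*j^2*a*M*N^2) +
    (-2*j^2*a*M^2*N) + (-6*j^2*a^2*M^2*N) + 6*j^3*a*M*N^2 + (-2*j^4*N^3))/8

def T4 (j a M N : ℚ) : ℚ :=
  (7*j*N^4 + (-28*j*a*M*N^3) + (-36*j*a*M^2*N^2) + (-16*j*a*M^3*N) + (-8*j*a*M^4) +
    (-24*j*a^2*M^2*N^2) + 24*j*a^2*M^3*N + 8*j*a^2*M^4 + 72*j*a^3*M^3*N + 72*j*a^3*M^4 +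
    48*j*a^4*M^4 + 88*j^2*a*M*N^3 + 24*j^2*a*M^2*N^2 + 16*j^2*a*M^3*N + (-144*j^2*a^2*M^2*N^2)
    + (-144*j^2*a^2*M^3*N) + (-192*j^2*a^3*M^3*N) + (-40*j^3*N^4) + 72*j^3*a*M*N^3 +
    72*j^3*a*M^2*N^2 + 288*j^3*a^2*M^2*N^2 + (-192*j^4*a*M*N^3) + 48*j^5*N^4)/240

def T11 (j a M N : ℚ) : ℚ :=
  (1*j*a*M^2 + 1*j*a^2*M^2 + 1*j^2*a*M^2 + 3*j^2*a^2*M^2 + (-6*j^3*a*M*N) + 3*j^4*N^2)/12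

def T12 (j a M N : ℚ) : ℚ :=
  (2*j*a^2*M^3 + 2*j*a^3*M^3 + (-1*j^2*a*M*N^2) + (-2*j^2*a*M^2*N) + 4*j^2*a^2*M^3 +
    4*j^2*a^3*M^3 + 1*j^3*N^3 + (-2*j^3*a*M*N^2) + (-4*j^3*a*M^2*N) + (-12*j^3*a^2*M^2*N) +
    12*j^4*a*M*N^2 + (-4*j^5*N^3))/24

def T13 (j a M N : ℚ) : ℚ :=
  ((-9*j*a*M^2*N^2) + (-6*j*a*M^3*N) + (-4*j*a*M^4) + (-9*j*a^2*M^2*N^2) + 2*j*a^2*M^4 +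
    6*j*a^3*M^3*N + 24*j*a^3*M^4 + 18*j*a^4*M^4 + (-3*j^2*a*M^2*N^2) + (-4*j^2*a*M^4) +
    (-9*j^2*a^2*M^2*N^2) + (-24*j^2*a^2*M^3*N) + 6*j^2*a^2*M^4 + (-6*j^2*a^3*M^3*N) +
    48*j^2*a^3*M^4 + 30*j^2*a^4*M^4 + 30*j^3*a*M*N^3 + 24*j^3*a*M^2*N^2 + 6*j^3*a*M^3*N +
    (-42*j^3*a^2*M^2*N^2) + (-96*j^3*a^2*M^3*N) + (-120*j^3*a^3*M^3*N) + (-15*j^4*N^4) +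
    30*j^4*a*M*N^3 + 48*j^4*a*M^2*N^2 + 180*j^4*a^2*M^2*N^2 + (-120*j^5*a*M*N^3) +
    30*j^6*N^4)/240

def T22 (j a M N : ℚ) : ℚ :=
  ((-12*j*a*M^2*N^2) + (-8*j*a*M^3*N) + (-12*j*a*M^4) + (-12*j*a^2*M^2*N^2) + (-4*j*a^2*M^4) +
    8*j*a^3*M^3*N + 72*j*a^3*M^4 + 64*j*a^4*M^4 + 5*j^2*N^4 + (-20*j^2*a*M*N^3) +
    (-24*j^2*a*M^2*N^2) + (-12*j^2*a*M^4) + (-12*j^2*a^2*M^2*N^2) + (-72*j^2*a^2*M^3*N) +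
    28*j^2*a^2*M^4 + (-48*j^2*a^3*M^3*N) + 144*j^2*a^3*M^4 + 80*j^2*a^4*M^4 + 80*j^3*a*M*N^3 +
    72*j^3*a*M^2*N^2 + 8*j^3*a*M^3*N + (-96*j^3*a^2*M^2*N^2) + (-288*j^3*a^2*M^3*N) +
    (-320*j^3*a^3*M^3*N) + (-40*j^4*N^4) + 80*j^4*a*M*N^3 + 144*j^4*a*M^2*N^2 +
    480*j^4*a^2*M^2*N^2 + (-320*j^5*a*M*N^3) + 80*j^6*N^4)/720

def T111 (j a M N : ℚ) : ℚ :=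
  (1*j^2*a^2*M^3 + 1*j^2*a^3*M^3 + (-1*j^3*a*M^2*N) + (-1*j^3*a^2*M^2*N) + 1*j^3*a^2*M^3 +
    1*j^3*a^3*M^3 + (-1*j^4*a*M^2*N) + (-3*j^4*a^2*M^2*N) + 3*j^5*a*M*N^2 + (-1*j^6*N^3))/8

def T112 (j a M N : ℚ) : ℚ :=
  ((-4*j*a*M^3*N) + (-4*j*a*M^4) + (-12*j*a^2*M^3*N) + (-4*j*a^2*M^4) + (-8*j*a^3*M^3*N) +
    4*j*a^3*M^4 + 4*j*a^4*M^4 + (-5*j^2*a*M^2*N^2) + (-4*j^2*a*M^3*N) + (-12*j^2*a*M^4) +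
    (-5*j^2*a^2*M^2*N^2) + 10*j^2*a^2*M^3*N + 10*j^2*a^2*M^4 + 18*j^2*a^3*M^3*N +
    102*j^2*a^3*M^4 + 80*j^2*a^4*M^4 + (-5*j^3*a*M^2*N^2) + 4*j^3*a*M^3*N + (-8*j^3*a*M^4) +
    (-15*j^3*a^2*M^2*N^2) + (-138*j^3*a^2*M^3*N) + 18*j^3*a^2*M^4 + (-130*j^3*a^3*M^3*N) +
    110*j^3*a^3*M^4 + 60*j^3*a^4*M^4 + 30*j^4*a*M*N^3 + 80*j^4*a*M^2*N^2 + 4*j^4*a*M^3*N +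
    20*j^4*a^2*M^2*N^2 + (-220*j^4*a^2*M^3*N) + (-240*j^4*a^3*M^3*N) + (-15*j^5*N^4) +
    30*j^5*a*M*N^3 + 110*j^5*a*M^2*N^2 + 360*j^5*a^2*M^2*N^2 + (-240*j^6*a*M*N^3) +
    60*j^7*N^4)/720

def T1111 (j a M N : ℚ) : ℚ :=
  ((-2*j*a^2*M^4) + (-4*j*a^3*M^4) + (-2*j*a^4*M^4) + (-2*j^2*a*M^4) + (-1*j^2*a^2*M^4) +
    6*j^2*a^3*M^4 + 5*j^2*a^4*M^4 + (-4*j^3*a*M^4) + 6*j^3*a^2*M^4 + 40*j^3*a^3*M^4 +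
    30*j^3*a^4*M^4 + (-2*j^4*a*M^4) + (-60*j^4*a^2*M^3*N) + 5*j^4*a^2*M^4 + (-60*j^4*a^3*M^3*N)
    + 30*j^4*a^3*M^4 + 15*j^4*a^4*M^4 + 30*j^5*a*M^2*N^2 + 30*j^5*a^2*M^2*N^2 +
    (-60*j^5*a^2*M^3*N) + (-60*j^5*a^3*M^3*N) + 30*j^6*a*M^2*N^2 + 90*j^6*a^2*M^2*N^2 +
    (-60*j^7*a*M*N^3) + 15*j^8*N^4)/240

/-- The moment identities. -/
structure Mom (M N : ℚ) (j a : ℕ) : Prop where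
  h0 : ∑ α ∈ Nset j a, (1 : ℚ) = (j + a).choose j
  h1 : ∑ α ∈ Nset j a, pw M N 1 α = (j + a).choose j * T1 j a M N
  h2 : ∑ α ∈ Nset j a, pw M N 2 α = (j + a).choose j * T2 j a M N
  h3 : ∑ α ∈ Nset j a, pw M N 3 α = (j + a).choose j * T3 j a M N
  h4 : ∑ α ∈ Nset j a, pw M N 4 α = (j + a).choose j * T4 j a M N
  h11 : ∑ α ∈ Nset j a, pw M N 1 α * pw M N 1 α = (j + a).choose j * T11 j a M N
  h12 : ∑ α ∈ Nset j a, pw M N 1 α * pw M N 2 α = (j + a).choose j * T12 j a M N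
  h13 : ∑ α ∈ Nset j a, pw M N 1 α * pw M N 3 α = (j + a).choose j * T13 j a M N
  h22 : ∑ α ∈ Nset j a, pw M N 2 α * pw M N 2 α = (j + a).choose j * T22 j a M N
  h111 : ∑ α ∈ Nset j a, pw M N 1 α * pw M N 1 α * pw M N 1 α = (j + a).choose j * T111 j a M N
  h112 : ∑ α ∈ Nset j a, pw M N 1 α * pw M N 1 α * pw M N 2 α = (j + a).choose j * T112 j a M N
  h1111 : ∑ α ∈ Nset j a, pw M N 1 α * pw M N 1 α * pw M N 1 α * pw M N 1 α = (j + a).choose j * T1111 j a M N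

lemma sh1 {M N : ℚ} {j b : ℕ} (h : Mom M N j b) (c : ℚ) (hc : c = (b : ℚ) * M - ((j : ℚ) + 1 / 2) * N) :
    ∑ α ∈ Nset j b, (pw M N 1 (Fin.snoc (α := fun _ => ℕ) α b : Fin (j+1) → ℕ))
      = (j + b).choose j * (1 * c ^ 1 + T1 j b M N) := by
  have e : ∀ α : Fin j → ℕ, (pw M N 1 (Fin.snoc (α := fun _ => ℕ) α b : Fin (j+1) → ℕ))
    = ((1:ℚ)) * c ^ 1 + (pw M N 1 α) * c ^ 0 := by
    intro α
    simp only [pw_snoc, ← hc]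
    ring
  rw [Finset.sum_congr rfl (fun α _ => e α)]
  simp only [Finset.sum_add_distrib, ← Finset.sum_mul]
  rw [h.h0, h.h1]
  ring

lemma rec1 (j a M N : ℚ) : (j + a + 2) * T1 (j+1) (a+1) M N = (a + 1) * T1 (j+1) a M N
    + (j + 1) * (1 * ((a + 1) * M - (j + 1 / 2) * N) ^ 1 + T1 j (a+1) M N) := by
  simp only [T1]
  ring

lemma recz1 (j M N : ℚ) : T1 (j+1) 0 M N = 1 * (0 * M - (j + 1 / 2) * N) ^ 1 + T1 j 0 M N := by
  simp only [T1]
  ring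

lemma sh2 {M N : ℚ} {j b : ℕ} (h : Mom M N j b) (c : ℚ) (hc : c = (b : ℚ) * M - ((j : ℚ) + 1 / 2) * N) :
    ∑ α ∈ Nset j b, (pw M N 2 (Fin.snoc (α := fun _ => ℕ) α b : Fin (j+1) → ℕ))
      = (j + b).choose j * (1 * c ^ 2 + T2 j b M N) := by
  have e : ∀ α : Fin j → ℕ, (pw M N 2 (Fin.snoc (α := fun _ => ℕ) α b : Fin (j+1) → ℕ))
    = ((1:ℚ)) * c ^ 2 + (pw M N 2 α) * c ^ 0 := by
    intro α
    simp only [pw_snoc, ← hc]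
    ring
  rw [Finset.sum_congr rfl (fun α _ => e α)]
  simp only [Finset.sum_add_distrib, ← Finset.sum_mul]
  rw [h.h0, h.h2]
  ring

lemma rec2 (j a M N : ℚ) : (j + a + 2) * T2 (j+1) (a+1) M N = (a + 1) * T2 (j+1) a M N
    + (j + 1) * (1 * ((a + 1) * M - (j + 1 / 2) * N) ^ 2 + T2 j (a+1) M N) := by
  simp only [T2]
  ring

lemma recz2 (j M N : ℚ) : T2 (j+1) 0 M N = 1 * (0 * M - (j + 1 / 2) * N) ^ 2 + T2 j 0 M N := by
  simp only [T2]
  ring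

lemma sh3 {M N : ℚ} {j b : ℕ} (h : Mom M N j b) (c : ℚ) (hc : c = (b : ℚ) * M - ((j : ℚ) + 1 / 2) * N) :
    ∑ α ∈ Nset j b, (pw M N 3 (Fin.snoc (α := fun _ => ℕ) α b : Fin (j+1) → ℕ))
      = (j + b).choose j * (1 * c ^ 3 + T3 j b M N) := by
  have e : ∀ α : Fin j → ℕ, (pw M N 3 (Fin.snoc (α := fun _ => ℕ) α b : Fin (j+1) → ℕ))
    = ((1:ℚ)) * c ^ 3 + (pw M N 3 α) * c ^ 0 := by
    intro α
    simp only [pw_snoc, ← hc]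
    ring
  rw [Finset.sum_congr rfl (fun α _ => e α)]
  simp only [Finset.sum_add_distrib, ← Finset.sum_mul]
  rw [h.h0, h.h3]
  ring

lemma rec3 (j a M N : ℚ) : (j + a + 2) * T3 (j+1) (a+1) M N = (a + 1) * T3 (j+1) a M N
    + (j + 1) * (1 * ((a + 1) * M - (j + 1 / 2) * N) ^ 3 + T3 j (a+1) M N) := by
  simp only [T3]
  ring

lemma recz3 (j M N : ℚ) : T3 (j+1) 0 M N = 1 * (0 * M - (j + 1 / 2) * N) ^ 3 + T3 j 0 M N := by
  simp only [T3]
  ring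

lemma sh4 {M N : ℚ} {j b : ℕ} (h : Mom M N j b) (c : ℚ) (hc : c = (b : ℚ) * M - ((j : ℚ) + 1 / 2) * N) :
    ∑ α ∈ Nset j b, (pw M N 4 (Fin.snoc (α := fun _ => ℕ) α b : Fin (j+1) → ℕ))
      = (j + b).choose j * (1 * c ^ 4 + T4 j b M N) := by
  have e : ∀ α : Fin j → ℕ, (pw M N 4 (Fin.snoc (α := fun _ => ℕ) α b : Fin (j+1) → ℕ))
    = ((1:ℚ)) * c ^ 4 + (pw M N 4 α) * c ^ 0 := by
    intro α
    simp only [pw_snoc, ← hc]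
    ring
  rw [Finset.sum_congr rfl (fun α _ => e α)]
  simp only [Finset.sum_add_distrib, ← Finset.sum_mul]
  rw [h.h0, h.h4]
  ring

lemma rec4 (j a M N : ℚ) : (j + a + 2) * T4 (j+1) (a+1) M N = (a + 1) * T4 (j+1) a M N
    + (j + 1) * (1 * ((a + 1) * M - (j + 1 / 2) * N) ^ 4 + T4 j (a+1) M N) := by
  simp only [T4]
  ring

lemma recz4 (j M N : ℚ) : T4 (j+1) 0 M N = 1 * (0 * M - (j + 1 / 2) * N) ^ 4 + T4 j 0 M N := by
  simp only [T4]
  ring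

lemma sh11 {M N : ℚ} {j b : ℕ} (h : Mom M N j b) (c : ℚ) (hc : c = (b : ℚ) * M - ((j : ℚ) + 1 / 2) * N) :
    ∑ α ∈ Nset j b, (pw M N 1 (Fin.snoc (α := fun _ => ℕ) α b : Fin (j+1) → ℕ) * pw M N 1 (Fin.snoc (α := fun _ => ℕ) α b : Fin (j+1) → ℕ))
      = (j + b).choose j * (1 * c ^ 2 + T1 j b M N * c ^ 1 + T1 j b M N * c ^ 1 + T11 j b M N) := by
  have e : ∀ α : Fin j → ℕ, (pw M N 1 (Fin.snoc (α := fun _ => ℕ) α b : Fin (j+1) → ℕ) * pw M N 1 (Fin.snoc (α := fun _ => ℕ) α b : Fin (j+1) → ℕ))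
    = ((1:ℚ)) * c ^ 2 + (pw M N 1 α) * c ^ 1 + (pw M N 1 α) * c ^ 1 + (pw M N 1 α * pw M N 1 α) * c ^ 0 := by
    intro α
    simp only [pw_snoc, ← hc]
    ring
  rw [Finset.sum_congr rfl (fun α _ => e α)]
  simp only [Finset.sum_add_distrib, ← Finset.sum_mul]
  rw [h.h0, h.h1, h.h11]
  ring

lemma rec11 (j a M N : ℚ) : (j + a + 2) * T11 (j+1) (a+1) M N = (a + 1) * T11 (j+1) a M N
    + (j + 1) * (1 * ((a + 1) * M - (j + 1 / 2) * N) ^ 2 + T1 j (a+1) M N * ((a + 1) * M - (j + 1 / 2) * N) ^ 1 + T1 j (a+1) M N * ((a + 1) * M - (j + 1 / 2) * N) ^ 1 + T11 j (a+1) M N) := by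
  simp only [T1, T11]
  ring

lemma recz11 (j M N : ℚ) : T11 (j+1) 0 M N = 1 * (0 * M - (j + 1 / 2) * N) ^ 2 + T1 j 0 M N * (0 * M - (j + 1 / 2) * N) ^ 1 + T1 j 0 M N * (0 * M - (j + 1 / 2) * N) ^ 1 + T11 j 0 M N := by
  simp only [T1, T11]
  ring

lemma sh12 {M N : ℚ} {j b : ℕ} (h : Mom M N j b) (c : ℚ) (hc : c = (b : ℚ) * M - ((j : ℚ) + 1 / 2) * N) :
    ∑ α ∈ Nset j b, (pw M N 1 (Fin.snoc (α := fun _ => ℕ) α b : Fin (j+1) → ℕ) * pw M N 2 (Fin.snoc (α := fun _ => ℕ) α b : Fin (j+1) → ℕ))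
      = (j + b).choose j * (1 * c ^ 3 + T1 j b M N * c ^ 2 + T2 j b M N * c ^ 1 + T12 j b M N) := by
  have e : ∀ α : Fin j → ℕ, (pw M N 1 (Fin.snoc (α := fun _ => ℕ) α b : Fin (j+1) → ℕ) * pw M N 2 (Fin.snoc (α := fun _ => ℕ) α b : Fin (j+1) → ℕ))
    = ((1:ℚ)) * c ^ 3 + (pw M N 1 α) * c ^ 2 + (pw M N 2 α) * c ^ 1 + (pw M N 1 α * pw M N 2 α) * c ^ 0 := by
    intro α
    simp only [pw_snoc, ← hc]
    ring
  rw [Finset.sum_congr rfl (fun α _ => e α)]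
  simp only [Finset.sum_add_distrib, ← Finset.sum_mul]
  rw [h.h0, h.h1, h.h12, h.h2]
  ring

lemma rec12 (j a M N : ℚ) : (j + a + 2) * T12 (j+1) (a+1) M N = (a + 1) * T12 (j+1) a M N
    + (j + 1) * (1 * ((a + 1) * M - (j + 1 / 2) * N) ^ 3 + T1 j (a+1) M N * ((a + 1) * M - (j + 1 / 2) * N) ^ 2 + T2 j (a+1) M N * ((a + 1) * M - (j + 1 / 2) * N) ^ 1 + T12 j (a+1) M N) := by
  simp only [T1, T12, T2]
  ring

lemma recz12 (j M N : ℚ) : T12 (j+1) 0 M N = 1 * (0 * M - (j + 1 / 2) * N) ^ 3 + T1 j 0 M N * (0 * M - (j + 1 / 2) * N) ^ 2 + T2 j 0 M N * (0 * M - (j + 1 / 2) * N) ^ 1 + T12 j 0 M N := by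
  simp only [T1, T12, T2]
  ring

lemma sh13 {M N : ℚ} {j b : ℕ} (h : Mom M N j b) (c : ℚ) (hc : c = (b : ℚ) * M - ((j : ℚ) + 1 / 2) * N) :
    ∑ α ∈ Nset j b, (pw M N 1 (Fin.snoc (α := fun _ => ℕ) α b : Fin (j+1) → ℕ) * pw M N 3 (Fin.snoc (α := fun _ => ℕ) α b : Fin (j+1) → ℕ))
      = (j + b).choose j * (1 * c ^ 4 + T1 j b M N * c ^ 3 + T3 j b M N * c ^ 1 + T13 j b M N) := by
  have e : ∀ α : Fin j → ℕ, (pw M N 1 (Fin.snoc (α := fun _ => ℕ) α b : Fin (j+1) → ℕ) * pw M N 3 (Fin.snoc (α := fun _ => ℕ) α b : Fin (j+1) → ℕ))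
    = ((1:ℚ)) * c ^ 4 + (pw M N 1 α) * c ^ 3 + (pw M N 3 α) * c ^ 1 + (pw M N 1 α * pw M N 3 α) * c ^ 0 := by
    intro α
    simp only [pw_snoc, ← hc]
    ring
  rw [Finset.sum_congr rfl (fun α _ => e α)]
  simp only [Finset.sum_add_distrib, ← Finset.sum_mul]
  rw [h.h0, h.h1, h.h13, h.h3]
  ring

lemma rec13 (j a M N : ℚ) : (j + a + 2) * T13 (j+1) (a+1) M N = (a + 1) * T13 (j+1) a M N
    + (j + 1) * (1 * ((a + 1) * M - (j + 1 / 2) * N) ^ 4 + T1 j (a+1) M N * ((a + 1) * M - (j + 1 / 2) * N) ^ 3 + T3 j (a+1) M N * ((a + 1) * M - (j + 1 / 2) * N) ^ 1 + T13 j (a+1) M N) := by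
  simp only [T1, T13, T3]
  ring

lemma recz13 (j M N : ℚ) : T13 (j+1) 0 M N = 1 * (0 * M - (j + 1 / 2) * N) ^ 4 + T1 j 0 M N * (0 * M - (j + 1 / 2) * N) ^ 3 + T3 j 0 M N * (0 * M - (j + 1 / 2) * N) ^ 1 + T13 j 0 M N := by
  simp only [T1, T13, T3]
  ring

lemma sh22 {M N : ℚ} {j b : ℕ} (h : Mom M N j b) (c : ℚ) (hc : c = (b : ℚ) * M - ((j : ℚ) + 1 / 2) * N) :
    ∑ α ∈ Nset j b, (pw M N 2 (Fin.snoc (α := fun _ => ℕ) α b : Fin (j+1) → ℕ) * pw M N 2 (Fin.snoc (α := fun _ => ℕ) α b : Fin (j+1) → ℕ))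
      = (j + b).choose j * (1 * c ^ 4 + T2 j b M N * c ^ 2 + T2 j b M N * c ^ 2 + T22 j b M N) := by
  have e : ∀ α : Fin j → ℕ, (pw M N 2 (Fin.snoc (α := fun _ => ℕ) α b : Fin (j+1) → ℕ) * pw M N 2 (Fin.snoc (α := fun _ => ℕ) α b : Fin (j+1) → ℕ))
    = ((1:ℚ)) * c ^ 4 + (pw M N 2 α) * c ^ 2 + (pw M N 2 α) * c ^ 2 + (pw M N 2 α * pw M N 2 α) * c ^ 0 := by
    intro α
    simp only [pw_snoc, ← hc]
    ring
  rw [Finset.sum_congr rfl (fun α _ => e α)]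
  simp only [Finset.sum_add_distrib, ← Finset.sum_mul]
  rw [h.h0, h.h2, h.h22]
  ring

lemma rec22 (j a M N : ℚ) : (j + a + 2) * T22 (j+1) (a+1) M N = (a + 1) * T22 (j+1) a M N
    + (j + 1) * (1 * ((a + 1) * M - (j + 1 / 2) * N) ^ 4 + T2 j (a+1) M N * ((a + 1) * M - (j + 1 / 2) * N) ^ 2 + T2 j (a+1) M N * ((a + 1) * M - (j + 1 / 2) * N) ^ 2 + T22 j (a+1) M N) := by
  simp only [T2, T22]
  ring

lemma recz22 (j M N : ℚ) : T22 (j+1) 0 M N = 1 * (0 * M - (j + 1 / 2) * N) ^ 4 + T2 j 0 M N * (0 * M - (j + 1 / 2) * N) ^ 2 + T2 j 0 M N * (0 * M - (j + 1 / 2) * N) ^ 2 + T22 j 0 M N := by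
  simp only [T2, T22]
  ring

lemma sh111 {M N : ℚ} {j b : ℕ} (h : Mom M N j b) (c : ℚ) (hc : c = (b : ℚ) * M - ((j : ℚ) + 1 / 2) * N) :
    ∑ α ∈ Nset j b, (pw M N 1 (Fin.snoc (α := fun _ => ℕ) α b : Fin (j+1) → ℕ) * pw M N 1 (Fin.snoc (α := fun _ => ℕ) α b : Fin (j+1) → ℕ) * pw M N 1 (Fin.snoc (α := fun _ => ℕ) α b : Fin (j+1) → ℕ))
      = (j + b).choose j * (1 * c ^ 3 + T1 j b M N * c ^ 2 + T1 j b M N * c ^ 2 + T11 j b M N * c ^ 1 + T1 j b M N * c ^ 2 + T11 j b M N * c ^ 1 + T11 j b M N * c ^ 1 + T111 j b M N) := by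
  have e : ∀ α : Fin j → ℕ, (pw M N 1 (Fin.snoc (α := fun _ => ℕ) α b : Fin (j+1) → ℕ) * pw M N 1 (Fin.snoc (α := fun _ => ℕ) α b : Fin (j+1) → ℕ) * pw M N 1 (Fin.snoc (α := fun _ => ℕ) α b : Fin (j+1) → ℕ))
    = ((1:ℚ)) * c ^ 3 + (pw M N 1 α) * c ^ 2 + (pw M N 1 α) * c ^ 2 + (pw M N 1 α * pw M N 1 α) * c ^ 1 + (pw M N 1 α) * c ^ 2 + (pw M N 1 α * pw M N 1 α) * c ^ 1 + (pw M N 1 α * pw M N 1 α) * c ^ 1 + (pw M N 1 α * pw M N 1 α * pw M N 1 α) * c ^ 0 := by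
    intro α
    simp only [pw_snoc, ← hc]
    ring
  rw [Finset.sum_congr rfl (fun α _ => e α)]
  simp only [Finset.sum_add_distrib, ← Finset.sum_mul]
  rw [h.h0, h.h1, h.h11, h.h111]
  ring

lemma rec111 (j a M N : ℚ) : (j + a + 2) * T111 (j+1) (a+1) M N = (a + 1) * T111 (j+1) a M N
    + (j + 1) * (1 * ((a + 1) * M - (j + 1 / 2) * N) ^ 3 + T1 j (a+1) M N * ((a + 1) * M - (j + 1 / 2) * N) ^ 2 + T1 j (a+1) M N * ((a + 1) * M - (j + 1 / 2) * N) ^ 2 + T11 j (a+1) M N * ((a + 1) * M - (j + 1 / 2) * N) ^ 1 + T1 j (a+1) M N * ((a + 1) * M - (j + 1 / 2) * N) ^ 2 + T11 j (a+1) M N * ((a + 1) * M - (j + 1 / 2) * N) ^ 1 + T11 j (a+1) M N * ((a + 1) * M - (j + 1 / 2) * N) ^ 1 + T111 j (a+1) M N) := by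
  simp only [T1, T11, T111]
  ring

lemma recz111 (j M N : ℚ) : T111 (j+1) 0 M N = 1 * (0 * M - (j + 1 / 2) * N) ^ 3 + T1 j 0 M N * (0 * M - (j + 1 / 2) * N) ^ 2 + T1 j 0 M N * (0 * M - (j + 1 / 2) * N) ^ 2 + T11 j 0 M N * (0 * M - (j + 1 / 2) * N) ^ 1 + T1 j 0 M N * (0 * M - (j + 1 / 2) * N) ^ 2 + T11 j 0 M N * (0 * M - (j + 1 / 2) * N) ^ 1 + T11 j 0 M N * (0 * M - (j + 1 / 2) * N) ^ 1 + T111 j 0 M N := by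
  simp only [T1, T11, T111]
  ring

lemma sh112 {M N : ℚ} {j b : ℕ} (h : Mom M N j b) (c : ℚ) (hc : c = (b : ℚ) * M - ((j : ℚ) + 1 / 2) * N) :
    ∑ α ∈ Nset j b, (pw M N 1 (Fin.snoc (α := fun _ => ℕ) α b : Fin (j+1) → ℕ) * pw M N 1 (Fin.snoc (α := fun _ => ℕ) α b : Fin (j+1) → ℕ) * pw M N 2 (Fin.snoc (α := fun _ => ℕ) α b : Fin (j+1) → ℕ))
      = (j + b).choose j * (1 * c ^ 4 + T1 j b M N * c ^ 3 + T1 j b M N * c ^ 3 + T11 j b M N * c ^ 2 + T2 j b M N * c ^ 2 + T12 j b M N * c ^ 1 + T12 j b M N * c ^ 1 + T112 j b M N) := by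
  have e : ∀ α : Fin j → ℕ, (pw M N 1 (Fin.snoc (α := fun _ => ℕ) α b : Fin (j+1) → ℕ) * pw M N 1 (Fin.snoc (α := fun _ => ℕ) α b : Fin (j+1) → ℕ) * pw M N 2 (Fin.snoc (α := fun _ => ℕ) α b : Fin (j+1) → ℕ))
    = ((1:ℚ)) * c ^ 4 + (pw M N 1 α) * c ^ 3 + (pw M N 1 α) * c ^ 3 + (pw M N 1 α * pw M N 1 α) * c ^ 2 + (pw M N 2 α) * c ^ 2 + (pw M N 1 α * pw M N 2 α) * c ^ 1 + (pw M N 1 α * pw M N 2 α) * c ^ 1 + (pw M N 1 α * pw M N 1 α * pw M N 2 α) * c ^ 0 := by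
    intro α
    simp only [pw_snoc, ← hc]
    ring
  rw [Finset.sum_congr rfl (fun α _ => e α)]
  simp only [Finset.sum_add_distrib, ← Finset.sum_mul]
  rw [h.h0, h.h1, h.h11, h.h112, h.h12, h.h2]
  ring

lemma rec112 (j a M N : ℚ) : (j + a + 2) * T112 (j+1) (a+1) M N = (a + 1) * T112 (j+1) a M N
    + (j + 1) * (1 * ((a + 1) * M - (j + 1 / 2) * N) ^ 4 + T1 j (a+1) M N * ((a + 1) * M - (j + 1 / 2) * N) ^ 3 + T1 j (a+1) M N * ((a + 1) * M - (j + 1 / 2) * N) ^ 3 + T11 j (a+1) M N * ((a + 1) * M - (j + 1 / 2) * N) ^ 2 + T2 j (a+1) M N * ((a + 1) * M - (j + 1 / 2) * N) ^ 2 + T12 j (a+1) M N * ((a + 1) * M - (j + 1 / 2) * N) ^ 1 + T12 j (a+1) M N * ((a + 1) * M - (j + 1 / 2) * N) ^ 1 + T112 j (a+1) M N) := by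
  simp only [T1, T11, T112, T12, T2]
  ring

lemma recz112 (j M N : ℚ) : T112 (j+1) 0 M N = 1 * (0 * M - (j + 1 / 2) * N) ^ 4 + T1 j 0 M N * (0 * M - (j + 1 / 2) * N) ^ 3 + T1 j 0 M N * (0 * M - (j + 1 / 2) * N) ^ 3 + T11 j 0 M N * (0 * M - (j + 1 / 2) * N) ^ 2 + T2 j 0 M N * (0 * M - (j + 1 / 2) * N) ^ 2 + T12 j 0 M N * (0 * M - (j + 1 / 2) * N) ^ 1 + T12 j 0 M N * (0 * M - (j + 1 / 2) * N) ^ 1 + T112 j 0 M N := by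
  simp only [T1, T11, T112, T12, T2]
  ring

lemma sh1111 {M N : ℚ} {j b : ℕ} (h : Mom M N j b) (c : ℚ) (hc : c = (b : ℚ) * M - ((j : ℚ) + 1 / 2) * N) :
    ∑ α ∈ Nset j b, (pw M N 1 (Fin.snoc (α := fun _ => ℕ) α b : Fin (j+1) → ℕ) * pw M N 1 (Fin.snoc (α := fun _ => ℕ) α b : Fin (j+1) → ℕ) * pw M N 1 (Fin.snoc (α := fun _ => ℕ) α b : Fin (j+1) → ℕ) * pw M N 1 (Fin.snoc (α := fun _ => ℕ) α b : Fin (j+1) → ℕ))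
      = (j + b).choose j * (1 * c ^ 4 + T1 j b M N * c ^ 3 + T1 j b M N * c ^ 3 + T11 j b M N * c ^ 2 + T1 j b M N * c ^ 3 + T11 j b M N * c ^ 2 + T11 j b M N * c ^ 2 + T111 j b M N * c ^ 1 + T1 j b M N * c ^ 3 + T11 j b M N * c ^ 2 + T11 j b M N * c ^ 2 + T111 j b M N * c ^ 1 + T11 j b M N * c ^ 2 + T111 j b M N * c ^ 1 + T111 j b M N * c ^ 1 + T1111 j b M N) := by
  have e : ∀ α : Fin j → ℕ, (pw M N 1 (Fin.snoc (α := fun _ => ℕ) α b : Fin (j+1) → ℕ) * pw M N 1 (Fin.snoc (α := fun _ => ℕ) α b : Fin (j+1) → ℕ) * pw M N 1 (Fin.snoc (α := fun _ => ℕ) α b : Fin (j+1) → ℕ) * pw M N 1 (Fin.snoc (α := fun _ => ℕ) α b : Fin (j+1) → ℕ))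
    = ((1:ℚ)) * c ^ 4 + (pw M N 1 α) * c ^ 3 + (pw M N 1 α) * c ^ 3 + (pw M N 1 α * pw M N 1 α) * c ^ 2 + (pw M N 1 α) * c ^ 3 + (pw M N 1 α * pw M N 1 α) * c ^ 2 + (pw M N 1 α * pw M N 1 α) * c ^ 2 + (pw M N 1 α * pw M N 1 α * pw M N 1 α) * c ^ 1 + (pw M N 1 α) * c ^ 3 + (pw M N 1 α * pw M N 1 α) * c ^ 2 + (pw M N 1 α * pw M N 1 α) * c ^ 2 + (pw M N 1 α * pw M N 1 α * pw M N 1 α) * c ^ 1 + (pw M N 1 α * pw M N 1 α) * c ^ 2 + (pw M N 1 α * pw M N 1 α * pw M N 1 α) * c ^ 1 + (pw M N 1 α * pw M N 1 α * pw M N 1 α) * c ^ 1 + (pw M N 1 α * pw M N 1 α * pw M N 1 α * pw M N 1 α) * c ^ 0 := by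
    intro α
    simp only [pw_snoc, ← hc]
    ring
  rw [Finset.sum_congr rfl (fun α _ => e α)]
  simp only [Finset.sum_add_distrib, ← Finset.sum_mul]
  rw [h.h0, h.h1, h.h11, h.h111, h.h1111]
  ring

lemma rec1111 (j a M N : ℚ) : (j + a + 2) * T1111 (j+1) (a+1) M N = (a + 1) * T1111 (j+1) a M N
    + (j + 1) * (1 * ((a + 1) * M - (j + 1 / 2) * N) ^ 4 + T1 j (a+1) M N * ((a + 1) * M - (j + 1 / 2) * N) ^ 3 + T1 j (a+1) M N * ((a + 1) * M - (j + 1 / 2) * N) ^ 3 + T11 j (a+1) M N * ((a + 1) * M - (j + 1 / 2) * N) ^ 2 + T1 j (a+1) M N * ((a + 1) * M - (j + 1 / 2) * N) ^ 3 + T11 j (a+1) M N * ((a + 1) * M - (j + 1 / 2) * N) ^ 2 + T11 j (a+1) M N * ((a + 1) * M - (j + 1 / 2) * N) ^ 2 + T111 j (a+1) M N * ((a + 1) * M - (j + 1 / 2) * N) ^ 1 + T1 j (a+1) M N * ((a + 1) * M - (j + 1 / 2) * N) ^ 3 + T11 j (a+1) M N * ((a + 1) * M - (j + 1 / 2) *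 N) ^ 2 + T11 j (a+1) M N * ((a + 1) * M - (j + 1 / 2) * N) ^ 2 + T111 j (a+1) M N * ((a + 1) * M - (j + 1 / 2) * N) ^ 1 + T11 j (a+1) M N * ((a + 1) * M - (j + 1 / 2) * N) ^ 2 + T111 j (a+1) M N * ((a + 1) * M - (j + 1 / 2) * N) ^ 1 + T111 j (a+1) M N * ((a + 1) * M - (j + 1 / 2) * N) ^ 1 + T1111 j (a+1) M N) := by
  simp only [T1, T11, T111, T1111]
  ring

lemma recz1111 (j M N : ℚ) : T1111 (j+1) 0 M N = 1 * (0 * M - (j + 1 / 2) * N) ^ 4 + T1 j 0 M N * (0 * M - (j + 1 / 2) * N) ^ 3 + T1 j 0 M N * (0 * M - (j + 1 / 2) * N) ^ 3 + T11 j 0 M N * (0 * M - (j + 1 / 2) * N) ^ 2 + T1 j 0 M N * (0 * M - (j + 1 / 2) * N) ^ 3 + T11 j 0 M N * (0 * M - (j + 1 / 2) * N) ^ 2 + T11 j 0 M N * (0 * M - (j + 1 / 2) * N) ^ 2 + T111 j 0 M N * (0 * M - (j + 1 / 2) * N) ^ 1 + T1 j 0 M N * (0 * M - (j + 1 / 2)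 * N) ^ 3 + T11 j 0 M N * (0 * M - (j + 1 / 2) * N) ^ 2 + T11 j 0 M N * (0 * M - (j + 1 / 2) * N) ^ 2 + T111 j 0 M N * (0 * M - (j + 1 / 2) * N) ^ 1 + T11 j 0 M N * (0 * M - (j + 1 / 2) * N) ^ 2 + T111 j 0 M N * (0 * M - (j + 1 / 2) * N) ^ 1 + T111 j 0 M N * (0 * M - (j + 1 / 2) * N) ^ 1 + T1111 j 0 M N := by
  simp only [T1, T11, T111, T1111]
  ring

lemma mom_zero (M N : ℚ) (a : ℕ) : Mom M N 0 a := by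
  constructor <;> rw [Nset_zero] <;> simp [pw, T1, T2, T3, T4, T11, T12, T13, T22, T111, T112, T1111]

lemma mom_rec_zero (M N : ℚ) (j : ℕ) (h : Mom M N j 0) : Mom M N (j+1) 0 := by
  constructor <;> rw [Nset_rec_zero]
  · rw [h.h0]; simp
  · rw [sh1 h _ rfl]; push_cast; rw [recz1]; simp
  · rw [sh2 h _ rfl]; push_cast; rw [recz2]; simp
  · rw [sh3 h _ rfl]; push_cast; rw [recz3]; simp
  · rw [sh4 h _ rfl]; push_cast; rw [recz4]; simp
  · rw [sh11 h _ rfl]; push_cast; rw [recz11]; simp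
  · rw [sh12 h _ rfl]; push_cast; rw [recz12]; simp
  · rw [sh13 h _ rfl]; push_cast; rw [recz13]; simp
  · rw [sh22 h _ rfl]; push_cast; rw [recz22]; simp
  · rw [sh111 h _ rfl]; push_cast; rw [recz111]; simp
  · rw [sh112 h _ rfl]; push_cast; rw [recz112]; simp
  · rw [sh1111 h _ rfl]; push_cast; rw [recz1111]; simp

lemma mom_rec (M N : ℚ) (j a : ℕ) (h1 : Mom M N (j+1) a) (h2 : Mom M N j (a+1)) :
    Mom M N (j+1) (a+1) := by
  have e1 : ((j + 1 + (a + 1)).choose (j+1) : ℚ) = (j + 1 + a).choose (j+1) + (j + (a+1)).choose j := by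
    have : j + 1 + (a+1) = (j + 1 + a) + 1 := by ring
    rw [this, Nat.choose_succ_succ']
    have : j + (a+1) = j + 1 + a := by ring
    rw [this]; push_cast; ring
  have e2 : ((a : ℚ) + 1) * (j + (a+1)).choose j = (j + 1) * (j + 1 + a).choose (j+1) := by
    have := Nat.choose_succ_right_eq (j + 1 + a) j
    have h3 : j + 1 + a - j = a + 1 := by omega
    have h4 : j + (a+1) = j + 1 + a := by ring
    rw [h3] at this
    rw [h4]
    have := congrArg (Nat.cast (R := ℚ)) this
    push_cast at this
    linarith
  have e3 : ((j : ℚ) + a + 2) * (j + 1 + a).choose (j+1) = (a+1) * (j + 1 + (a + 1)).choose (j+1) := by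
    rw [e1]; linarith
  have e4 : ((j : ℚ) + a + 2) * (j + (a+1)).choose j = (j+1) * (j + 1 + (a + 1)).choose (j+1) := by
    rw [e1]; linarith
  have ne : ((j : ℚ) + a + 2) ≠ 0 := by positivity
  have key : ∀ t t1 t2 : ℚ, ((j : ℚ) + a + 2) * t = (a + 1) * t1 + (j + 1) * t2 →
      ((j + 1 + a).choose (j+1) : ℚ) * t1 + (j + (a+1)).choose j * t2
        = (j + 1 + (a + 1)).choose (j+1) * t := by
    intro t t1 t2 h
    apply mul_left_cancel₀ ne
    linear_combination t1 * e3 + t2 * e4 - ((j + 1 + (a + 1)).choose (j+1) : ℚ) * h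
  constructor <;> rw [Nset_rec]
  · rw [h1.h0, h2.h0, e1]
  · rw [h1.h1, sh1 h2 _ rfl]; push_cast; exact key _ _ _ (rec1 _ _ _ _)
  · rw [h1.h2, sh2 h2 _ rfl]; push_cast; exact key _ _ _ (rec2 _ _ _ _)
  · rw [h1.h3, sh3 h2 _ rfl]; push_cast; exact key _ _ _ (rec3 _ _ _ _)
  · rw [h1.h4, sh4 h2 _ rfl]; push_cast; exact key _ _ _ (rec4 _ _ _ _)
  · rw [h1.h11, sh11 h2 _ rfl]; push_cast; exact key _ _ _ (rec11 _ _ _ _)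
  · rw [h1.h12, sh12 h2 _ rfl]; push_cast; exact key _ _ _ (rec12 _ _ _ _)
  · rw [h1.h13, sh13 h2 _ rfl]; push_cast; exact key _ _ _ (rec13 _ _ _ _)
  · rw [h1.h22, sh22 h2 _ rfl]; push_cast; exact key _ _ _ (rec22 _ _ _ _)
  · rw [h1.h111, sh111 h2 _ rfl]; push_cast; exact key _ _ _ (rec111 _ _ _ _)
  · rw [h1.h112, sh112 h2 _ rfl]; push_cast; exact key _ _ _ (rec112 _ _ _ _)
  · rw [h1.h1111, sh1111 h2 _ rfl]; push_cast; exact key _ _ _ (rec1111 _ _ _ _)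

lemma mom (M N : ℚ) (j : ℕ) : ∀ a, Mom M N j a := by
  induction j with
  | zero => exact mom_zero M N
  | succ j ih =>
    intro a
    induction a with
    | zero => exact mom_rec_zero M N j (ih 0)
    | succ a iha => exact mom_rec M N j a iha (ih (a+1))

lemma C_ne (q : ℚ) (h : q ≠ 0) : (PowerSeries.C q : PowerSeries ℚ) ≠ 0 := by
  intro h5
  exact h ((map_eq_zero_iff PowerSeries.C PowerSeries.C_injective).1 h5)

lemma solve_lin {ι : Type*} (s : Finset ι) (x Y Z : PowerSeries ℚ) (m K r : ℚ) (q : ι → ℚ)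
    (hx : x ≠ 0) (hm : m ≠ 0) (hK : K ≠ 0) (hcard : (s.card : ℚ) = K)
    (h : ∑ i ∈ s, x * (PowerSeries.C m * Y + PowerSeries.C (q i) * Z) = 0)
    (hq : ∑ i ∈ s, q i = -(K * m * r)) : Y = PowerSeries.C r * Z := by
  rw [← Finset.mul_sum, Finset.sum_add_distrib, Finset.sum_const, nsmul_eq_mul, ← Finset.sum_mul, ← map_sum, hq] at h
  have h2 := (mul_eq_zero.1 h).resolve_left hx
  have hc : (s.card : PowerSeries ℚ) = PowerSeries.C K := by
    rw [← hcard]; simp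
  rw [hc] at h2
  have h3 : PowerSeries.C (K * m) * (Y - PowerSeries.C r * Z) = 0 := by
    rw [← h2]; simp only [map_neg, map_mul]; ring
  have h4 := C_ne _ (mul_ne_zero hK hm)
  exact sub_eq_zero.1 ((mul_eq_zero.1 h3).resolve_left h4)

lemma exp2 (x u F0 F1 F2 W1 W2 Y : PowerSeries ℚ) (e1 e2 m : ℚ) (h0 : F0 = x)
    (h1 : F1 = W1 * F0) (h2 : 2 * F2 = W1 * F1 + 2 * W2 * F0)
    (w1 : W1 = PowerSeries.C e1 * u)
    (w2 : W2 = PowerSeries.C m * Y + PowerSeries.C e2 * u ^ 2) :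
    F2 = x * (PowerSeries.C m * Y + PowerSeries.C (e2 + e1 ^ 2 / 2) * u ^ 2) := by
  have hq : (2 : PowerSeries ℚ) * PowerSeries.C (e2 + e1 ^ 2 / 2)
      = 2 * PowerSeries.C e2 + PowerSeries.C e1 ^ 2 := by
    simp only [← map_ofNat (PowerSeries.C : ℚ →+* PowerSeries ℚ) 2, ← map_mul, ← map_pow, ← map_add]
    congr 1; ring
  apply mul_left_cancel₀ (by
    rw [← map_ofNat (PowerSeries.C : ℚ →+* PowerSeries ℚ) 2]
    exact C_ne _ (by norm_num) : (2 : PowerSeries ℚ) ≠ 0)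
  subst h0 h1 w1 w2
  linear_combination h2 - F0 * u ^ 2 * hq

lemma exp3 (x u F0 F1 F2 F3 W1 W2 W3 Y : PowerSeries ℚ) (e1 e2 e3 m : ℚ) (h0 : F0 = x)
    (h1 : F1 = W1 * F0) (h2 : 2 * F2 = W1 * F1 + 2 * W2 * F0)
    (h3 : 3 * F3 = W1 * F2 + 2 * W2 * F1 + 3 * W3 * F0)
    (w1 : W1 = PowerSeries.C e1 * u)
    (w2 : W2 = PowerSeries.C e2 * u ^ 2)
    (w3 : W3 = PowerSeries.C m * Y + PowerSeries.C e3 * u ^ 3) :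
    F3 = x * (PowerSeries.C m * Y + PowerSeries.C (e3 + e1 * e2 + e1 ^ 3 / 6) * u ^ 3) := by
  have hq : (6 : PowerSeries ℚ) * PowerSeries.C (e3 + e1 * e2 + e1 ^ 3 / 6)
      = 6 * PowerSeries.C e3 + 6 * PowerSeries.C e1 * PowerSeries.C e2 + PowerSeries.C e1 ^ 3 := by
    simp only [← map_ofNat (PowerSeries.C : ℚ →+* PowerSeries ℚ) 6, ← map_mul, ← map_pow, ← map_add]
    congr 1; ring
  apply mul_left_cancel₀ (by
    rw [← map_ofNat (PowerSeries.C : ℚ →+* PowerSeries ℚ) 6]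
    exact C_ne _ (by norm_num) : (6 : PowerSeries ℚ) ≠ 0)
  subst h0 h1 w1 w2 w3
  linear_combination 2 * h3 + PowerSeries.C e1 * u * h2 - F0 * u ^ 3 * hq

lemma exp4 (x u F0 F1 F2 F3 F4 W1 W2 W3 W4 Y : PowerSeries ℚ) (e1 e2 e3 e4 m : ℚ) (h0 : F0 = x)
    (h1 : F1 = W1 * F0) (h2 : 2 * F2 = W1 * F1 + 2 * W2 * F0)
    (h3 : 3 * F3 = W1 * F2 + 2 * W2 * F1 + 3 * W3 * F0)
    (h4 : 4 * F4 = W1 * F3 + 2 * W2 * F2 + 3 * W3 * F1 + 4 * W4 * F0)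
    (w1 : W1 = PowerSeries.C e1 * u)
    (w2 : W2 = PowerSeries.C e2 * u ^ 2)
    (w3 : W3 = PowerSeries.C e3 * u ^ 3)
    (w4 : W4 = PowerSeries.C m * Y + PowerSeries.C e4 * u ^ 4) :
    F4 = x * (PowerSeries.C m * Y + PowerSeries.C
      (e4 + e1 * e3 + e2 ^ 2 / 2 + e1 ^ 2 * e2 / 2 + e1 ^ 4 / 24) * u ^ 4) := by
  have hq : (24 : PowerSeries ℚ) * PowerSeries.C
      (e4 + e1 * e3 + e2 ^ 2 / 2 + e1 ^ 2 * e2 / 2 + e1 ^ 4 / 24)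
      = 24 * PowerSeries.C e4 + 24 * PowerSeries.C e1 * PowerSeries.C e3
        + 12 * PowerSeries.C e2 ^ 2 + 12 * PowerSeries.C e1 ^ 2 * PowerSeries.C e2
        + PowerSeries.C e1 ^ 4 := by
    simp only [← map_ofNat (PowerSeries.C : ℚ →+* PowerSeries ℚ) 24,
      ← map_ofNat (PowerSeries.C : ℚ →+* PowerSeries ℚ) 12, ← map_mul, ← map_pow, ← map_add]
    congr 1; ring
  apply mul_left_cancel₀ (by
    rw [← map_ofNat (PowerSeries.C : ℚ →+* PowerSeries ℚ) 24]
    exact C_ne _ (by norm_num) : (24 : PowerSeries ℚ) ≠ 0)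
  subst h0 h1 w1 w2 w3 w4
  linear_combination 6 * h4 + 2 * PowerSeries.C e1 * u * h3
    + (PowerSeries.C e1 ^ 2 * u ^ 2 + 6 * PowerSeries.C e2 * u ^ 2) * h2
    - F0 * u ^ 4 * hq

lemma sl_rhs (K k : ℕ) : sl k ((K : MvPowerSeries (Fin 2) ℚ) * (1 + MvPowerSeries.X 0))
    = if k = 0 then (K : PowerSeries ℚ) * (1 + PowerSeries.X) else 0 := by
  have e : sl k (1 + MvPowerSeries.X 0 : MvPowerSeries (Fin 2) ℚ)
      = if k = 0 then (1 + PowerSeries.X : PowerSeries ℚ) else 0 := by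
    ext i
    rw [coeff_sl, map_add, MvPowerSeries.coeff_one, MvPowerSeries.coeff_X]
    split_ifs with h1 h2 h3 h4 h5 h6 <;>
      simp_all [PowerSeries.coeff_one, PowerSeries.coeff_X, Finsupp.ext_iff, Fin.forall_fin_two]
  have e2 : ((K : MvPowerSeries (Fin 2) ℚ) * (1 + MvPowerSeries.X 0))
      = K • (1 + MvPowerSeries.X 0) := by rw [nsmul_eq_mul]
  rw [e2, map_nsmul, e]
  split_ifs <;> simp [mul_add]

lemma deriv_C_mul (c : ℚ) (f : PowerSeries ℚ) :
    PowerSeries.derivative ℚ (PowerSeries.C c * f)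
      = PowerSeries.C c * PowerSeries.derivative ℚ f := by
  rw [← PowerSeries.smul_eq_C_mul, ← PowerSeries.smul_eq_C_mul, Derivation.map_smul]

/-- The first coefficient. -/
noncomputable def PP1 (m n : ℚ) : ℚ := (m - 1) * n * (m + n) / (24 * m)

/-- The second coefficient. -/
noncomputable def PP2 (m n : ℚ) : ℚ := -((4 * m ^ 2 * n ^ 2 * (m + n) ^ 2
              + m * n * (m + n) * (3 * m ^ 2 - 7 * m * n - 7 * n ^ 2)
              - n * (m + n) * (4 * m ^ 2 - 3 * m * n - 3 * n ^ 2)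
              + m * n * (m + n)) / (960 * m))

lemma mom1 (m n : ℕ) :
    ∑ α ∈ Nset m n, (pw m n 1 α / m) = -(((m + n).choose m : ℚ) * m * 0) := by
  have h := mom m n m n
  rw [← Finset.sum_div, h.h1, T1]
  ring

lemma mom2 (m n : ℕ) (hm : (m : ℚ) ≠ 0) :
    ∑ α ∈ Nset m n, (-(pw m n 2 α / (2 * m)) + (pw m n 1 α / m) ^ 2 / 2)
      = -(((m + n).choose m : ℚ) * m * PP1 m n) := by
  have h := mom m n m n
  have e : ∀ α : Fin m → ℕ, (-(pw m n 2 α / (2 * m)) + (pw m n 1 α / m) ^ 2 / 2)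
      = pw m n 2 α * (-(1 / (2 * m))) + (pw m n 1 α * pw m n 1 α) * (1 / (2 * m ^ 2)) := by
    intro α; field_simp
  rw [Finset.sum_congr rfl (fun α _ => e α)]
  simp only [Finset.sum_add_distrib, ← Finset.sum_mul]
  rw [h.h2, h.h11, T2, T11, PP1]
  field_simp
  ring

lemma mom3 (m n : ℕ) (hm : (m : ℚ) ≠ 0) (P : ℚ) :
    ∑ α ∈ Nset m n, ((-2 * P * pw m n 1 α + pw m n 3 α / (3 * m))
        + (pw m n 1 α / m) * (m * P - pw m n 2 α / (2 * m)) + (pw m n 1 α / m) ^ 3 / 6)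
      = -(((m + n).choose m : ℚ) * m * 0) := by
  have h := mom m n m n
  have e : ∀ α : Fin m → ℕ, ((-2 * P * pw m n 1 α + pw m n 3 α / (3 * m))
        + (pw m n 1 α / m) * (m * P - pw m n 2 α / (2 * m)) + (pw m n 1 α / m) ^ 3 / 6)
      = pw m n 1 α * (-P) + pw m n 3 α * (1 / (3 * m))
        + (pw m n 1 α * pw m n 2 α) * (-(1 / (2 * m ^ 2)))
        + (pw m n 1 α * pw m n 1 α * pw m n 1 α) * (1 / (6 * m ^ 3)) := by
    intro α; field_simp; ring
  rw [Finset.sum_congr rfl (fun α _ => e α)]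
  simp only [Finset.sum_add_distrib, ← Finset.sum_mul]
  rw [h.h1, h.h3, h.h12, h.h111, T1, T3, T12, T111]
  field_simp
  ring

lemma mom4 (m n : ℕ) (hm : (m : ℚ) ≠ 0) (P : ℚ) (hP : P = PP1 m n) :
    ∑ α ∈ Nset m n, ((3 * P * pw m n 2 α - pw m n 4 α / (4 * m))
        + (pw m n 1 α / m) * (-2 * P * pw m n 1 α + pw m n 3 α / (3 * m))
        + (m * P - pw m n 2 α / (2 * m)) ^ 2 / 2
        + (pw m n 1 α / m) ^ 2 * (m * P - pw m n 2 α / (2 * m)) / 2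
        + (pw m n 1 α / m) ^ 4 / 24)
      = -(((m + n).choose m : ℚ) * m * PP2 m n) := by
  have h := mom m n m n
  have e : ∀ α : Fin m → ℕ, ((3 * P * pw m n 2 α - pw m n 4 α / (4 * m))
        + (pw m n 1 α / m) * (-2 * P * pw m n 1 α + pw m n 3 α / (3 * m))
        + (m * P - pw m n 2 α / (2 * m)) ^ 2 / 2
        + (pw m n 1 α / m) ^ 2 * (m * P - pw m n 2 α / (2 * m)) / 2
        + (pw m n 1 α / m) ^ 4 / 24)
      = 1 * (m ^ 2 * P ^ 2 / 2) + pw m n 2 α * (5 * P / 2)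
        + pw m n 4 α * (-(1 / (4 * m)))
        + (pw m n 1 α * pw m n 1 α) * (-(3 * P / (2 * m)))
        + (pw m n 1 α * pw m n 3 α) * (1 / (3 * m ^ 2))
        + (pw m n 2 α * pw m n 2 α) * (1 / (8 * m ^ 2))
        + (pw m n 1 α * pw m n 1 α * pw m n 2 α) * (-(1 / (4 * m ^ 3)))
        + (pw m n 1 α * pw m n 1 α * pw m n 1 α * pw m n 1 α) * (1 / (24 * m ^ 4)) := by
    intro α; field_simp; ring
  rw [Finset.sum_congr rfl (fun α _ => e α)]
  simp only [Finset.sum_add_distrib, ← Finset.sum_mul]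
  rw [h.h0, h.h2, h.h4, h.h11, h.h13, h.h22, h.h112, h.h1111, T2, T4, T11, T13, T22, T112, T1111,
    hP, PP1, PP2]
  field_simp
  ring

/-- The first two gap coefficients:  for the unique zero-constant-term solution `V` of
the difference equation, the coefficient of `E^2` equals `P_1(m,n)·(1+X)^{-2}` with
`P_1(m,n) = (m-1)·n·h/(24m)`, and the coefficient of `E^4` equals `P_2(m,n)·(1+X)^{-4}`
with `P_2(m,n) = -(4m²n²h² + mnh(3m²-7mn-7n²) - nh(4m²-3mn-3n²) + mnh)/(960m)`,
where `h = m+n`. -/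
theorem gap_coefficients_P1_P2 (m n : ℕ) (hm : 0 < m) (hn : 0 < n) (hmn : Nat.Coprime m n)
    (V : MvPowerSeries (Fin 2) ℚ)
    (hV0 : MvPowerSeries.constantCoeff V = 0) (hVeq : diffEq m n V) :
    (∀ i : ℕ, MvPowerSeries.coeff (Finsupp.single 0 i + Finsupp.single 1 2) V
        = (((m : ℚ) - 1) * n * ((m : ℚ) + n) / (24 * m)) *
            PowerSeries.coeff i (((1 + PowerSeries.X : PowerSeries ℚ))⁻¹ ^ 2)) ∧
    (∀ i : ℕ, MvPowerSeries.coeff (Finsupp.single 0 i + Finsupp.single 1 4) V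
        = (-((4 * (m : ℚ) ^ 2 * (n : ℚ) ^ 2 * ((m : ℚ) + n) ^ 2
              + (m : ℚ) * n * ((m : ℚ) + n) * (3 * (m : ℚ) ^ 2 - 7 * m * n - 7 * (n : ℚ) ^ 2)
              - (n : ℚ) * ((m : ℚ) + n) * (4 * (m : ℚ) ^ 2 - 3 * m * n - 3 * (n : ℚ) ^ 2)
              + (m : ℚ) * n * ((m : ℚ) + n)) / (960 * m))) *
            PowerSeries.coeff i (((1 + PowerSeries.X : PowerSeries ℚ))⁻¹ ^ 4)) := by
  classical
  have hm0 : (m : ℚ) ≠ 0 := by positivity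
  set S := Finset.univ.filter
      (fun α : Fin m → Fin (n + 1) => ∀ i j : Fin m, i ≤ j → α i ≤ α j) with hS
  set W : (Fin m → Fin (n + 1)) → MvPowerSeries (Fin 2) ℚ := fun α =>
    ∑ j : Fin m, shiftS ((α j : ℚ) * m - (((j : ℕ) : ℚ) + 1 / 2) * n) V with hW
  have hK : (((m + n).choose m : ℕ) : ℚ) ≠ 0 := by
    have := Nat.choose_pos (Nat.le_add_right m n)
    positivity
  have hcard : (S.card : ℚ) = ((m + n).choose m : ℕ) := by
    have h1 := sum_Nset m n (fun _ => (1 : ℚ))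
    rw [(mom 1 1 m n).h0] at h1
    rw [← h1]; simp [hS]
  have hW0 : ∀ α, MvPowerSeries.constantCoeff (W α) = 0 := by
    intro α
    simp [hW, const_shiftS, hV0]
  set q : ℕ → (Fin m → Fin (n + 1)) → ℚ := fun k α => pw m n k (fun i => (α i : ℕ)) with hq
  have hq0 : ∀ α, q 0 α = m := by intro α; simp [hq, pw]
  have hsl : ∀ k α, sl k (W α) = ∑ t ∈ Finset.range (k+1),
      PowerSeries.C (q t α / (t.factorial : ℚ)) *
        (PowerSeries.derivative ℚ)^[t] (sl (k - t) V) := by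
    intro k α
    simp only [hW, map_sum, sl_shiftS]
    rw [Finset.sum_comm]
    apply Finset.sum_congr rfl
    intro t _
    rw [← Finset.sum_mul, ← map_sum, ← Finset.sum_div]
    simp only [hq, pw]
  have hsum : ∀ k, ∑ α ∈ S, sl k (fexp (W α))
      = if k = 0 then (((m + n).choose m : ℕ) : PowerSeries ℚ) * (1 + PowerSeries.X) else 0 := by
    intro k
    rw [← map_sum, ← sl_rhs]
    exact congrArg (sl k) hVeq
  set x : PowerSeries ℚ := 1 + PowerSeries.X with hx
  set u : PowerSeries ℚ := x⁻¹ with hu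
  have hxu : x * u = 1 := PowerSeries.mul_inv_cancel _ (by simp [hx])
  have hxne : x ≠ 0 := left_ne_zero_of_mul_eq_one hxu
  set D := PowerSeries.derivative ℚ with hD
  have hDx : D x = 1 := by simp [hD, hx]
  have hDu : D u = -u ^ 2 := by
    rw [hu, hD, PowerSeries.derivative_inv', ← hD, hDx, mul_one]
  have hDu2 : D (u ^ 2) = -2 * u ^ 3 := by
    rw [hD, PowerSeries.derivative_pow, ← hD, hDu]; push_cast; ring
  have hDu3 : D (u ^ 3) = -3 * u ^ 4 := by
    rw [hD, PowerSeries.derivative_pow, ← hD, hDu]; push_cast; ring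
  have hsl0 : ∀ α, sl 0 (W α) = PowerSeries.C (m : ℚ) * sl 0 V := by
    intro α; rw [hsl]; simp [hq0]
  have hF0 : ∀ α, sl 0 (fexp (W α)) = x := by
    intro α
    have h1 := hsum 0
    rw [Finset.sum_congr rfl (fun β _ => sl_fexp_congr (W β) (W α) (by rw [hsl0, hsl0])),
      Finset.sum_const, nsmul_eq_mul, if_pos rfl] at h1
    have h2 : (S.card : PowerSeries ℚ) = (((m + n).choose m : ℕ) : PowerSeries ℚ) := by
      have : S.card = (m + n).choose m := by exact_mod_cast hcard
      rw [this]
    rw [h2] at h1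
    refine mul_left_cancel₀ ?_ h1
    have := C_ne _ hK
    simpa using this
  have hm1 : PowerSeries.C (m : ℚ) * PowerSeries.C (1 / (m : ℚ)) = 1 := by
    rw [← map_mul, mul_one_div_cancel hm0, map_one]
  have hDV0 : D (sl 0 V) = PowerSeries.C (1 / (m : ℚ)) * u := by
    have h1 := sl_fexp_deriv (W 0) (hW0 0)
    rw [hF0, hsl0, deriv_C_mul, ← hD, hDx] at h1
    linear_combination (-PowerSeries.C (1 / (m : ℚ)) * u) * h1 - D (sl 0 V) * hm1
      - (PowerSeries.C (m : ℚ) * PowerSeries.C (1 / (m : ℚ))) * D (sl 0 V) * hxu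
  have hDV02 : D (D (sl 0 V)) = PowerSeries.C (-(1 / (m : ℚ))) * u ^ 2 := by
    rw [hDV0, hD, deriv_C_mul, ← hD, hDu, map_neg]; ring
  have hDV03 : D (D (D (sl 0 V))) = PowerSeries.C (2 / (m : ℚ)) * u ^ 3 := by
    have e : (2 / (m : ℚ)) = 2 * (1 / (m : ℚ)) := by ring
    rw [hDV02, hD, deriv_C_mul, ← hD, hDu2, e, map_neg, map_mul, map_ofNat]; ring
  have hDV04 : D (D (D (D (sl 0 V)))) = PowerSeries.C (-(6 / (m : ℚ))) * u ^ 4 := by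
    have e : -(6 / (m : ℚ)) = (2 / (m : ℚ)) * (-3) := by ring
    rw [hDV03, hD, deriv_C_mul, ← hD, hDu3, e, map_mul, map_neg, map_ofNat]; ring
  have F1 : ∀ α, sl 1 (fexp (W α)) = sl 1 (W α) * sl 0 (fexp (W α)) := by
    intro α
    have h := sl_fexp_succ 0 (W α) (hW0 α)
    simpa using h
  have F2 : ∀ α, 2 * sl 2 (fexp (W α)) = sl 1 (W α) * sl 1 (fexp (W α))
      + 2 * sl 2 (W α) * sl 0 (fexp (W α)) := by
    intro α
    have h := sl_fexp_succ 1 (W α) (hW0 α)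
    simp [Finset.Nat.antidiagonal_succ] at h
    linear_combination h
  have F3 : ∀ α, 3 * sl 3 (fexp (W α)) = sl 1 (W α) * sl 2 (fexp (W α))
      + 2 * sl 2 (W α) * sl 1 (fexp (W α)) + 3 * sl 3 (W α) * sl 0 (fexp (W α)) := by
    intro α
    have h := sl_fexp_succ 2 (W α) (hW0 α)
    simp [Finset.Nat.antidiagonal_succ] at h
    linear_combination h
  have F4 : ∀ α, 4 * sl 4 (fexp (W α)) = sl 1 (W α) * sl 3 (fexp (W α))
      + 2 * sl 2 (W α) * sl 2 (fexp (W α)) + 3 * sl 3 (W α) * sl 1 (fexp (W α))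
      + 4 * sl 4 (W α) * sl 0 (fexp (W α)) := by
    intro α
    have h := sl_fexp_succ 3 (W α) (hW0 α)
    simp [Finset.Nat.antidiagonal_succ] at h
    linear_combination h
  have W1 : ∀ α, sl 1 (W α) = PowerSeries.C (m : ℚ) * sl 1 V
      + PowerSeries.C (q 1 α / m) * u := by
    intro α
    rw [hsl]
    simp only [Finset.sum_range_succ, Finset.sum_range_zero, hq0, Function.iterate_succ,
      Function.iterate_zero, Function.comp, id, Nat.sub_self, Nat.sub_zero, hDV0]
    simp only [div_eq_mul_inv, map_mul]
    simp
    ring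
  -- first slice
  have V1 : sl 1 V = 0 := by
    have h := solve_lin S x (sl 1 V) u m _ 0 (fun α => q 1 α / m) hxne hm0 hK hcard ?_ ?_
    · rw [h]; simp
    · rw [← (hsum 1).trans (if_neg one_ne_zero)]
      apply Finset.sum_congr rfl
      intro α _
      rw [F1, hF0, W1]; ring
    · rw [← mom1 m n, ← sum_Nset]
  have W1' : ∀ α, sl 1 (W α) = PowerSeries.C (q 1 α / m) * u := by
    intro α; rw [W1, V1]; ring
  have W2 : ∀ α, sl 2 (W α) = PowerSeries.C (m : ℚ) * sl 2 V
      + PowerSeries.C (-(q 2 α / (2 * m))) * u ^ 2 := by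
    intro α
    have e : PowerSeries.C (-(q 2 α / (2 * m)))
      = PowerSeries.C (q 2 α / 2) * PowerSeries.C (-(1 / (m : ℚ))) := by
      rw [← map_mul]; congr 1; field_simp
    rw [hsl, e]
    simp only [Finset.sum_range_succ, Finset.sum_range_zero, hq0, Function.iterate_succ,
      Function.iterate_zero, Function.comp, id, Nat.sub_self, Nat.sub_zero, hDV02,
      Nat.reduceSub, V1, map_zero, Nat.factorial]
    simp
    ring
  have V2 : sl 2 V = PowerSeries.C (PP1 m n) * u ^ 2 := by
    refine solve_lin S x (sl 2 V) (u ^ 2) m _ (PP1 m n)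
      (fun α => -(q 2 α / (2 * m)) + (q 1 α / m) ^ 2 / 2) hxne hm0 hK hcard ?_ ?_
    · rw [← (hsum 2).trans (if_neg two_ne_zero)]
      apply Finset.sum_congr rfl
      intro α _
      exact (exp2 x u _ _ _ _ _ _ _ _ _ (hF0 α) (F1 α) (F2 α) (W1' α) (W2 α)).symm
    · rw [← mom2 m n hm0, ← sum_Nset]
  have DV2 : D (sl 2 V) = PowerSeries.C (-2 * PP1 m n) * u ^ 3 := by
    rw [V2, hD, deriv_C_mul, ← hD, hDu2, map_mul, map_neg, map_ofNat]; ring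
  have DDV2 : D (D (sl 2 V)) = PowerSeries.C (6 * PP1 m n) * u ^ 4 := by
    rw [DV2, hD, deriv_C_mul, ← hD, hDu3, map_mul, map_mul, map_neg, map_ofNat, map_ofNat]; ring
  have W2' : ∀ α, sl 2 (W α) = PowerSeries.C (m * PP1 m n - q 2 α / (2 * m)) * u ^ 2 := by
    intro α
    rw [W2, V2, sub_eq_add_neg, map_add, map_mul]; ring
  have W3 : ∀ α, sl 3 (W α) = PowerSeries.C (m : ℚ) * sl 3 V
      + PowerSeries.C (-2 * PP1 m n * q 1 α + q 3 α / (3 * m)) * u ^ 3 := by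
    intro α
    have e : PowerSeries.C (-2 * PP1 m n * q 1 α + q 3 α / (3 * m))
      = PowerSeries.C (q 1 α) * PowerSeries.C (-2 * PP1 m n)
        + PowerSeries.C (q 3 α / 6) * PowerSeries.C (2 / (m : ℚ)) := by
      rw [← map_mul, ← map_mul, ← map_add]; congr 1; field_simp; ring
    rw [hsl, e]
    simp only [Finset.sum_range_succ, Finset.sum_range_zero, hq0, Function.iterate_succ,
      Function.iterate_zero, Function.comp, id, Nat.sub_self, Nat.sub_zero, hDV03,
      Nat.reduceSub, V1, DV2, map_zero, Nat.factorial]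
    norm_num
    ring
  have V3 : sl 3 V = 0 := by
    have h := solve_lin S x (sl 3 V) (u ^ 3) m _ 0 (fun α =>
      (-2 * PP1 m n * q 1 α + q 3 α / (3 * m))
        + (q 1 α / m) * (m * PP1 m n - q 2 α / (2 * m)) + (q 1 α / m) ^ 3 / 6)
        hxne hm0 hK hcard ?_ ?_
    · rw [h]; simp
    · rw [← (hsum 3).trans (if_neg three_ne_zero)]
      apply Finset.sum_congr rfl
      intro α _
      exact (exp3 x u _ _ _ _ _ _ _ _ _ _ _ _ (hF0 α) (F1 α) (F2 α) (F3 α) (W1' α) (W2' α)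
        (W3 α)).symm
    · rw [← mom3 m n hm0 (PP1 m n), ← sum_Nset]
  have W3' : ∀ α, sl 3 (W α)
      = PowerSeries.C (-2 * PP1 m n * q 1 α + q 3 α / (3 * m)) * u ^ 3 := by
    intro α; rw [W3, V3]; ring
  have W4 : ∀ α, sl 4 (W α) = PowerSeries.C (m : ℚ) * sl 4 V
      + PowerSeries.C (3 * PP1 m n * q 2 α - q 4 α / (4 * m)) * u ^ 4 := by
    intro α
    have e : PowerSeries.C (3 * PP1 m n * q 2 α - q 4 α / (4 * m))
      = PowerSeries.C (q 2 α / 2) * PowerSeries.C (6 * PP1 m n)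
        + PowerSeries.C (q 4 α / 24) * PowerSeries.C (-(6 / (m : ℚ))) := by
      rw [← map_mul, ← map_mul, ← map_add]; congr 1; field_simp; ring
    rw [hsl, e]
    simp only [Finset.sum_range_succ, Finset.sum_range_zero, hq0, Function.iterate_succ,
      Function.iterate_zero, Function.comp, id, Nat.sub_self, Nat.sub_zero, hDV04,
      Nat.reduceSub, V1, V3, DDV2, map_zero, Nat.factorial]
    norm_num
    ring
  have V4 : sl 4 V = PowerSeries.C (PP2 m n) * u ^ 4 := by
    refine solve_lin S x (sl 4 V) (u ^ 4) m _ (PP2 m n) (fun α =>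
      ((3 * PP1 m n * q 2 α - q 4 α / (4 * m))
        + (q 1 α / m) * (-2 * PP1 m n * q 1 α + q 3 α / (3 * m))
        + (m * PP1 m n - q 2 α / (2 * m)) ^ 2 / 2
        + (q 1 α / m) ^ 2 * (m * PP1 m n - q 2 α / (2 * m)) / 2
        + (q 1 α / m) ^ 4 / 24)) hxne hm0 hK hcard ?_ ?_
    · rw [← (hsum 4).trans (if_neg four_ne_zero)]
      apply Finset.sum_congr rfl
      intro α _
      exact (exp4 x u _ _ _ _ _ _ _ _ _ _ _ _ _ _ _ (hF0 α) (F1 α) (F2 α) (F3 α) (F4 α)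
        (W1' α) (W2' α) (W3' α) (W4 α)).symm
    · rw [← mom4 m n hm0 (PP1 m n) rfl, ← sum_Nset]
  constructor
  · intro i
    rw [← coeff_sl, V2, PowerSeries.coeff_C_mul]
    rfl
  · intro i
    rw [← coeff_sl, V4, PowerSeries.coeff_C_mul]
    rfl
end
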